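/- Let (R, 𝔪, k) be a regular local ring of dimension 3. Let (m, n, r) be a tuple of positive integers with r = m − 3(n−1) + 2 ≥ 2, n ≥ 3, and m ≥ 2n+1 ≥ 7. Then there exists an ideal J ⊆ R with pd_R(R/J) = 3 such that R/J has Tor-algebra class G(r) and realizes the tuple (m, n, r): the minimal free resolution 0 → F_3 → F_2 → F_1 → R of R/J has rank_R(F_1) = m and rank_R(F_3) = n. -/

import Mathlib

open IsLocalRing

/-- `R/J` has projective dimension 3, Tor-algebra class `G(r)` (normal form
`f̄₁ⁱ f̄₂ⁱ = f̄₃¹` for `1 ≤ i ≤ r`, all other products of basis elements zero)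
and realizes the tuple `(m, n, r)`: its minimal free resolution
`0 → F₃ → F₂ → F₁ → R` has `rank F₁ = m` and `rank F₃ = n`. -/
def HasTorClassGWithRanks (R : Type) [CommRing R] [IsLocalRing R]
    (J : Ideal R) (m n r : ℕ) : Prop :=
  ∃ (n2 : ℕ) (h3 : 0 < n), r ≤ m ∧ r ≤ n2 ∧
  ∃ (d1 : (Fin m → R) →ₗ[R] R) (d2 : (Fin n2 → R) →ₗ[R] (Fin m → R))
    (d3 : (Fin n → R) →ₗ[R] (Fin n2 → R))
    (m11 : (Fin m → R) →ₗ[R] (Fin m → R) →ₗ[R] (Fin n2 → R))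
    (m12 : (Fin m → R) →ₗ[R] (Fin n2 → R) →ₗ[R] (Fin n → R)),
    -- minimal free resolution of `R/J`
    LinearMap.range d1 = J ∧
    LinearMap.ker d1 = LinearMap.range d2 ∧
    LinearMap.ker d2 = LinearMap.range d3 ∧
    LinearMap.ker d3 = ⊥ ∧
    (∀ v, d1 v ∈ maximalIdeal R) ∧
    (∀ v, d2 v ∈ maximalIdeal R • (⊤ : Submodule R (Fin m → R))) ∧
    (∀ v, d3 v ∈ maximalIdeal R • (⊤ : Submodule R (Fin n2 → R))) ∧
    -- DG-algebra axioms
    (∀ a b, d2 (m11 a b) = d1 a • b - d1 b • a) ∧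
    (∀ a, m11 a a = 0) ∧ (∀ a b, m11 a b = - m11 b a) ∧
    (∀ a z, d3 (m12 a z) = d1 a • z - m11 a (d2 z)) ∧
    (∀ a b c, m12 c (m11 a b) = m12 a (m11 b c)) ∧
    -- `G(r)` normal form for the induced products on `F ⊗ k`
    (∀ a b : Fin m, m11 (Pi.single a 1) (Pi.single b 1) ∈
      maximalIdeal R • (⊤ : Submodule R (Fin n2 → R))) ∧
    (∀ (a : Fin m) (b : Fin n2),
      m12 (Pi.single a 1) (Pi.single b 1) -
        (if (a : ℕ) = (b : ℕ) ∧ (a : ℕ) < r then Pi.single (⟨0, h3⟩ : Fin n) 1 else 0) ∈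
      maximalIdeal R • (⊤ : Submodule R (Fin n → R)))

/-!
The starting point is a Gorenstein ideal of grade three generated by the `N = r + b` (odd) maximal
Pfaffians of a cyclic alternating matrix. Its resolution `0 → R → Rᴺ → Rᴺ → R` is a DG algebra in
which the products of degrees one and two form a perfect pairing: class `G(N)`. Replace `b` of the
Pfaffians by the combinations of them whose coefficients are the columns of the presentation matrix
`d₁ : G₁ → R^b` of a finite-length module with free resolution `G` (trimming). The new ideal is
resolved by the mapping cone of a comparison map into `G`, and since `G` is exact the products lift
along it. When the entries of the Pfaffian resolution lie in a high power of `𝔪`, the Artin–Rees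
lemma lets all these liftings be chosen with entries in `𝔪`. Modulo `𝔪` only the pairing on the
`r` untouched Pfaffians survives, so the class is `G(r)`, with `m = r + g₁` and `n = 1 + g₃`.

For `G` take the direct sum of copies of the Koszul complex, with `(b, g₁, g₃) = (1, 3, 1)`, and of
one complex with `(b, g₁, g₃)` equal to `(1, 4, 2)` or `(2, 4, 2)`, chosen to make `r + b` odd: a
resolution of `R / ((x₀, x₁)² + (x₂))` or a Buchsbaum–Rim complex.
-/

namespace TorClassG

section SmulTop

variable {R P Q : Type*} [CommRing R] [AddCommGroup P] [Module R P] [AddCommGroup Q] [Module R Q]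
  {I : Ideal R}

theorem map_mem_smul_top (f : P →ₗ[R] Q) {v : P} (hv : v ∈ I • (⊤ : Submodule R P)) :
    f v ∈ I • (⊤ : Submodule R Q) :=
  Submodule.smul_top_le_comap_smul_top I f hv

theorem mem_smul_top_self {a : R} : a ∈ I • (⊤ : Submodule R R) ↔ a ∈ I := by
  rw [smul_eq_mul, Ideal.mul_top]

theorem mem_smul_top_pi {ι : Type*} [Finite ι] {v : ι → R} :
    v ∈ I • (⊤ : Submodule R (ι → R)) ↔ ∀ i, v i ∈ I := by
  refine ⟨fun hv i => mem_smul_top_self.mp (map_mem_smul_top (LinearMap.proj i) hv), fun hv => ?_⟩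
  cases nonempty_fintype ι
  classical rw [pi_eq_sum_univ' v]
  exact Submodule.sum_mem _ fun i _ => Submodule.smul_mem_smul (hv i) trivial

theorem mem_smul_top_prod {v : P × Q} :
    v ∈ I • (⊤ : Submodule R (P × Q)) ↔
      v.1 ∈ I • (⊤ : Submodule R P) ∧ v.2 ∈ I • (⊤ : Submodule R Q) := by
  refine ⟨fun hv => ⟨map_mem_smul_top (LinearMap.fst R P Q) hv,
    map_mem_smul_top (LinearMap.snd R P Q) hv⟩, fun ⟨hv₁, hv₂⟩ => ?_⟩
  have hsum : v = LinearMap.inl R P Q v.1 + LinearMap.inr R P Q v.2 := by simp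
  rw [hsum]
  exact add_mem (map_mem_smul_top _ hv₁) (map_mem_smul_top _ hv₂)

theorem smul_top_mono {J : Ideal R} (hIJ : I ≤ J) {v : P} (hv : v ∈ I • (⊤ : Submodule R P)) :
    v ∈ J • (⊤ : Submodule R P) :=
  Submodule.smul_mono_left hIJ hv

end SmulTop

section RegularTriple

variable {R : Type*} [CommRing R] {x : Fin 3 → R}

/-- Elementary form of the assertion that `x 0, x 1, x 2` is a regular sequence in every order,
without the requirement that it generate a proper ideal. -/
structure IsRegularTriple (x : Fin 3 → R) : Prop where
  eq_zero_of_mul_eq_zero : ∀ i a, x i * a = 0 → a = 0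
  dvd_of_mul_eq_mul : ∀ i j, i ≠ j → ∀ a b, x j * b = x i * a → x i ∣ b
  exists_eq_add : ∀ a b c, x 2 * c = x 0 * a + x 1 * b → ∃ u v, c = x 0 * u + x 1 * v

theorem IsRegularTriple.exists_koszul (hx : IsRegularTriple x) {a b c : R}
    (e : x 0 * a + x 1 * b + x 2 * c = 0) :
    ∃ α β γ, a = x 1 * γ - x 2 * β ∧ b = x 2 * α - x 0 * γ ∧ c = x 0 * β - x 1 * α := by
  obtain ⟨u, v, rfl⟩ := hx.exists_eq_add (-a) (-b) c (by linear_combination e)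
  obtain ⟨w, hw⟩ := hx.dvd_of_mul_eq_mul 0 1 (by decide) (-(a + x 2 * u)) (b + x 2 * v)
    (by linear_combination e)
  have ha := hx.eq_zero_of_mul_eq_zero 0 (a + x 2 * u + x 1 * w)
    (by linear_combination e - x 1 * hw)
  exact ⟨-v, u, -w, by linear_combination ha, by linear_combination hw, by ring⟩

open RingTheory.Sequence

theorem dvd_of_dvd_mul_of_isWeaklyRegular {a b : R} {l : List R}
    (h : IsWeaklyRegular R (a :: b :: l)) {t : R} (ht : a ∣ b * t) : a ∣ t := by
  have hb := mem_of_isSMulRegular_quotient_of_smul_mem (r := b) (x := t)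
    (h.regular_mod_prev 1 (by simp))
  rw [← Ideal.mem_span_singleton] at ht ⊢
  simpa [Ideal.ofList_cons] using hb (by simpa [Ideal.ofList_cons] using ht)

theorem mem_span_pair_of_isWeaklyRegular {a b c : R} {l : List R}
    (h : IsWeaklyRegular R (a :: b :: c :: l)) {t : R} (ht : c * t ∈ Ideal.span {a, b}) :
    t ∈ Ideal.span {a, b} := by
  have hc := mem_of_isSMulRegular_quotient_of_smul_mem (r := c) (x := t)
    (h.regular_mod_prev 2 (by simp))
  simpa [Ideal.ofList_cons, Ideal.span_insert] using hc (by
    simpa [Ideal.ofList_cons, Ideal.span_insert] using ht)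

theorem isWeaklyRegular_pow_last {a b c : R} (h : IsWeaklyRegular R [a, b, c]) (n : ℕ) :
    IsWeaklyRegular R [a, b, c ^ n] := by
  change IsWeaklyRegular R ([a, b] ++ [c]) at h
  change IsWeaklyRegular R ([a, b] ++ [c ^ n])
  rw [isWeaklyRegular_append_iff, isWeaklyRegular_singleton_iff] at h ⊢
  exact ⟨h.1, h.2.pow n⟩

variable [IsNoetherianRing R] [IsLocalRing R]

theorem isWeaklyRegular_map_of_perm (hx : ∀ i, x i ∈ maximalIdeal R)
    (h : IsWeaklyRegular R [x 0, x 1, x 2]) {l : List (Fin 3)} (hl : [0, 1, 2].Perm l) :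
    IsWeaklyRegular R (l.map x) :=
  isWeaklyRegular_of_perm_of_subset_maximalIdeal h (hl.map x)
    (by simp [hx, -mem_maximalIdeal])

theorem isRegularTriple_of_isWeaklyRegular (hx : ∀ i, x i ∈ maximalIdeal R)
    (h : IsWeaklyRegular R [x 0, x 1, x 2]) : IsRegularTriple x where
  eq_zero_of_mul_eq_zero i a ha := by
    obtain ⟨j, k, hl⟩ : ∃ j k, [0, 1, 2].Perm [i, j, k] := by clear * -; decide +revert
    have hi := isWeaklyRegular_map_of_perm hx h hl
    rw [List.map_cons, isWeaklyRegular_cons_iff] at hi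
    exact hi.1.right_eq_zero_of_smul ha
  dvd_of_mul_eq_mul i j hij a b hab := by
    obtain ⟨k, hl⟩ : ∃ k, [0, 1, 2].Perm [i, j, k] := by clear * - hij; decide +revert
    exact dvd_of_dvd_mul_of_isWeaklyRegular (isWeaklyRegular_map_of_perm hx h hl) ⟨a, hab⟩
  exists_eq_add a b c hc := by
    obtain ⟨u, v, huv⟩ := Ideal.mem_span_pair.mp (mem_span_pair_of_isWeaklyRegular h (t := c)
      (Ideal.mem_span_pair.mpr ⟨a, b, by linear_combination -hc⟩))
    exact ⟨u, v, by linear_combination -huv⟩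

theorem isWeaklyRegular_pow (hx : ∀ i, x i ∈ maximalIdeal R)
    (h : IsWeaklyRegular R [x 0, x 1, x 2]) {n : ℕ} (hn : 0 < n) :
    IsWeaklyRegular R [x 0 ^ n, x 1 ^ n, x 2 ^ n] := by
  have rotate {a b c : R} (ha : a ∈ maximalIdeal R) (hb : b ∈ maximalIdeal R)
      (hc : c ∈ maximalIdeal R) (h : IsWeaklyRegular R [a, b, c]) :
      IsWeaklyRegular R [b, c, a ^ n] :=
    isWeaklyRegular_pow_last (isWeaklyRegular_of_perm_of_subset_maximalIdeal h
      (List.perm_append_comm (l₁ := [a]) (l₂ := [b, c])) (by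
        simp only [List.mem_cons, List.not_mem_nil, or_false, forall_eq_or_imp, forall_eq]
        exact ⟨ha, hb, hc⟩)) n
  have hx' i : x i ^ n ∈ maximalIdeal R := Ideal.pow_mem_of_mem _ (hx i) n hn
  exact rotate (hx 2) (hx' 0) (hx' 1)
    (rotate (hx 1) (hx 2) (hx' 0) (rotate (hx 0) (hx 1) (hx 2) h))

end RegularTriple

section Resolution

variable {R F₀ F₁ F₂ F₃ G₀ G₁ G₂ G₃ : Type*} [CommRing R]
  [AddCommGroup F₀] [Module R F₀] [AddCommGroup F₁] [Module R F₁]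
  [AddCommGroup F₂] [Module R F₂] [AddCommGroup F₃] [Module R F₃]
  [AddCommGroup G₀] [Module R G₀] [AddCommGroup G₁] [Module R G₁]
  [AddCommGroup G₂] [Module R G₂] [AddCommGroup G₃] [Module R G₃]

variable (R F₀ F₁ F₂ F₃) in
/-- A resolution `0 → F₃ → F₂ → F₁ → F₀` of length three of the cokernel of `d₁`. Freeness of the
modules is not part of the structure. -/
structure Resolution where
  /-- The first differential. -/
  d₁ : F₁ →ₗ[R] F₀
  /-- The second differential. -/
  d₂ : F₂ →ₗ[R] F₁
  /-- The third differential. -/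
  d₃ : F₃ →ₗ[R] F₂
  exact₁ : Function.Exact d₂ d₁
  exact₂ : Function.Exact d₃ d₂
  injective : Function.Injective d₃

namespace Resolution

/-- All differentials have image in `I` times their target. For free modules this says that the
entries of their matrices lie in `I`; with `I` the maximal ideal it is minimality. -/
structure HasEntriesIn (F : Resolution R F₀ F₁ F₂ F₃) (I : Ideal R) : Prop where
  d₁_mem : ∀ v, F.d₁ v ∈ I • (⊤ : Submodule R F₀)
  d₂_mem : ∀ v, F.d₂ v ∈ I • (⊤ : Submodule R F₁)
  d₃_mem : ∀ v, F.d₃ v ∈ I • (⊤ : Submodule R F₂)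

/-- The direct sum of two resolutions. -/
def prod (F : Resolution R F₀ F₁ F₂ F₃) (G : Resolution R G₀ G₁ G₂ G₃) :
    Resolution R (F₀ × G₀) (F₁ × G₁) (F₂ × G₂) (F₃ × G₃) where
  d₁ := F.d₁.prodMap G.d₁
  d₂ := F.d₂.prodMap G.d₂
  d₃ := F.d₃.prodMap G.d₃
  exact₁ v := by simp [F.exact₁ v.1, G.exact₁ v.2, Prod.ext_iff]
  exact₂ v := by simp [F.exact₂ v.1, G.exact₂ v.2, Prod.ext_iff]
  injective := F.injective.prodMap G.injective

theorem HasEntriesIn.prod {F : Resolution R F₀ F₁ F₂ F₃} {G : Resolution R G₀ G₁ G₂ G₃}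
    {I : Ideal R} (hF : F.HasEntriesIn I) (hG : G.HasEntriesIn I) : (F.prod G).HasEntriesIn I where
  d₁_mem v := mem_smul_top_prod.mpr ⟨hF.d₁_mem v.1, hG.d₁_mem v.2⟩
  d₂_mem v := mem_smul_top_prod.mpr ⟨hF.d₂_mem v.1, hG.d₂_mem v.2⟩
  d₃_mem v := mem_smul_top_prod.mpr ⟨hF.d₃_mem v.1, hG.d₃_mem v.2⟩

/-- Transport of a resolution along isomorphisms of its modules. -/
def congr (F : Resolution R F₀ F₁ F₂ F₃) (e₀ : F₀ ≃ₗ[R] G₀) (e₁ : F₁ ≃ₗ[R] G₁)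
    (e₂ : F₂ ≃ₗ[R] G₂) (e₃ : F₃ ≃ₗ[R] G₃) : Resolution R G₀ G₁ G₂ G₃ where
  d₁ := e₀ ∘ₗ F.d₁ ∘ₗ e₁.symm
  d₂ := e₁ ∘ₗ F.d₂ ∘ₗ e₂.symm
  d₃ := e₂ ∘ₗ F.d₃ ∘ₗ e₃.symm
  exact₁ := (Function.Exact.iff_of_ladder_linearEquiv (e₁ := e₂) (e₂ := e₁) (e₃ := e₀)
    (by ext; simp) (by ext; simp)).mpr F.exact₁
  exact₂ := (Function.Exact.iff_of_ladder_linearEquiv (e₁ := e₃) (e₂ := e₂) (e₃ := e₁)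
    (by ext; simp) (by ext; simp)).mpr F.exact₂
  injective := e₂.injective.comp (F.injective.comp e₃.symm.injective)

theorem HasEntriesIn.congr {F : Resolution R F₀ F₁ F₂ F₃} {I : Ideal R} (hF : F.HasEntriesIn I)
    (e₀ : F₀ ≃ₗ[R] G₀) (e₁ : F₁ ≃ₗ[R] G₁) (e₂ : F₂ ≃ₗ[R] G₂) (e₃ : F₃ ≃ₗ[R] G₃) :
    (F.congr e₀ e₁ e₂ e₃).HasEntriesIn I where
  d₁_mem v := map_mem_smul_top e₀.toLinearMap (hF.d₁_mem (e₁.symm v))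
  d₂_mem v := map_mem_smul_top e₁.toLinearMap (hF.d₂_mem (e₂.symm v))
  d₃_mem v := map_mem_smul_top e₂.toLinearMap (hF.d₃_mem (e₃.symm v))

end Resolution

variable (R) in
/-- Concatenation of vectors, as a linear equivalence. -/
def appendEquiv (a b : ℕ) : ((Fin a → R) × (Fin b → R)) ≃ₗ[R] (Fin (a + b) → R) :=
  (LinearEquiv.sumArrowLequivProdArrow (Fin a) (Fin b) R R).symm ≪≫ₗ
    LinearEquiv.funCongrLeft R R finSumFinEquiv.symm

theorem appendEquiv_symm_apply {a b : ℕ} (v : Fin (a + b) → R) :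
    (appendEquiv R a b).symm v = (fun i => v (Fin.castAdd b i), fun i => v (Fin.natAdd a i)) := rfl

theorem appendEquiv_apply {a b : ℕ} (v : (Fin a → R) × (Fin b → R)) :
    appendEquiv R a b v = Fin.append v.1 v.2 :=
  (LinearEquiv.eq_symm_apply _).mp <| by
    ext i <;> simp [appendEquiv_symm_apply]

theorem appendEquiv_zero_dotProduct {a b : ℕ} (v : Fin a → R) (w : Fin (a + b) → R) :
    appendEquiv R a b (v, 0) ⬝ᵥ w = v ⬝ᵥ fun i => w (Fin.castAdd b i) := by
  simp [dotProduct, Fin.sum_univ_add, appendEquiv_apply]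

/-- There is a minimal free resolution `0 → R^g₃ → R^g₂ → R^g₁ → R^b` (for some `g₂`) of a module
annihilated by the squares of the `x i`. -/
def HasResolution [IsLocalRing R] (x : Fin 3 → R) (b g₁ g₃ : ℕ) : Prop :=
  ∃ g₂, ∃ G : Resolution R (Fin b → R) (Fin g₁ → R) (Fin g₂ → R) (Fin g₃ → R),
    G.HasEntriesIn (maximalIdeal R) ∧ ∀ i v, x i ^ 2 • v ∈ LinearMap.range G.d₁

theorem HasResolution.add [IsLocalRing R] {x : Fin 3 → R} {b g₁ g₃ b' g₁' g₃' : ℕ}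
    (h : HasResolution x b g₁ g₃) (h' : HasResolution x b' g₁' g₃') :
    HasResolution x (b + b') (g₁ + g₁') (g₃ + g₃') := by
  obtain ⟨g₂, G, hG, hx⟩ := h
  obtain ⟨g₂', G', hG', hx'⟩ := h'
  refine ⟨g₂ + g₂', (G.prod G').congr (appendEquiv R b b') (appendEquiv R g₁ g₁')
    (appendEquiv R g₂ g₂') (appendEquiv R g₃ g₃'), (hG.prod hG').congr _ _ _ _, fun i v => ?_⟩
  obtain ⟨⟨v, v'⟩, rfl⟩ := (appendEquiv R b b').surjective v
  obtain ⟨w, hw⟩ := hx i v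
  obtain ⟨w', hw'⟩ := hx' i v'
  exact ⟨appendEquiv R g₁ g₁' (w, w'), by
    simp [Resolution.congr, Resolution.prod, hw, hw', ← map_smul]⟩

theorem mulVecLin_mem_smul_top {ι κ : Type*} [Finite ι] [Fintype κ]
    {M : Matrix ι κ R} {I : Ideal R} (hM : ∀ i j, M i j ∈ I) (v : κ → R) :
    M.mulVecLin v ∈ I • (⊤ : Submodule R (ι → R)) :=
  mem_smul_top_pi.mpr fun i => Ideal.sum_mem _ fun j _ => Ideal.mul_mem_right _ _ (hM i j)

end Resolution

section Syzygies

variable {R : Type*} [CommRing R] {x : Fin 3 → R}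

theorem IsRegularTriple.eq_of_mul_eq_mul (hx : IsRegularTriple x) (i : Fin 3) {a b : R}
    (h : x i * a = x i * b) : a = b :=
  sub_eq_zero.mp (hx.eq_zero_of_mul_eq_zero i _ (by rw [mul_sub, h, sub_self]))

theorem IsRegularTriple.exists_koszul₂ (hx : IsRegularTriple x) {a b c : R}
    (e₁ : x 2 * a - x 0 * c = 0) (e₂ : -x 1 * a + x 0 * b = 0) :
    ∃ t, a = x 0 * t ∧ b = x 1 * t ∧ c = x 2 * t := by
  obtain ⟨t, rfl⟩ := hx.dvd_of_mul_eq_mul 0 1 (by decide) b a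
    (by linear_combination -e₂)
  exact ⟨t, rfl, hx.eq_of_mul_eq_mul 0 (by linear_combination e₂),
    hx.eq_of_mul_eq_mul 0 (by linear_combination -e₁)⟩

theorem IsRegularTriple.exists_square₁ (hx : IsRegularTriple x) {a b c d : R}
    (e : x 0 ^ 2 * a + x 0 * x 1 * b + x 1 ^ 2 * c + x 2 * d = 0) :
    ∃ p q r s t, a = x 1 * p - x 2 * r ∧ b = -x 0 * p + x 1 * q + x 2 * s ∧
      c = -x 0 * q + x 2 * t ∧ d = x 0 ^ 2 * r - x 0 * x 1 * s - x 1 ^ 2 * t := by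
  obtain ⟨α₀, β₀, γ₀, ha, hb, hd⟩ := hx.exists_koszul (a := x 0 * a + x 1 * b) (b := x 1 * c)
    (c := d) (by linear_combination e)
  obtain ⟨α, β, γ, rfl, hb', rfl⟩ := hx.exists_koszul (a := a) (b := b - γ₀) (c := β₀)
    (by linear_combination ha)
  obtain ⟨α', β', γ', rfl, rfl, hα₀⟩ := hx.exists_koszul (a := γ₀) (b := c) (c := -α₀)
    (by linear_combination hb)
  exact ⟨γ, γ', β, α - β', α', rfl, by linear_combination hb', by ring,
    by linear_combination hd + x 1 * hα₀⟩

theorem IsRegularTriple.exists_square₂ (hx : IsRegularTriple x) {p q r s t : R}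
    (e₀ : x 1 * p - x 2 * r = 0) (e₁ : -x 0 * p + x 1 * q + x 2 * s = 0)
    (e₂ : -x 0 * q + x 2 * t = 0) :
    ∃ u v, p = x 2 * u ∧ q = x 2 * v ∧ r = x 1 * u ∧ s = x 0 * u - x 1 * v ∧ t = x 0 * v := by
  obtain ⟨u, rfl⟩ := hx.dvd_of_mul_eq_mul 2 1 (by decide) r p (by linear_combination e₀)
  obtain ⟨v, rfl⟩ := hx.dvd_of_mul_eq_mul 2 0 (by decide) t q (by linear_combination -e₂)
  exact ⟨u, v, rfl, rfl, hx.eq_of_mul_eq_mul 2 (by linear_combination -e₀),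
    hx.eq_of_mul_eq_mul 2 (by linear_combination e₁),
    hx.eq_of_mul_eq_mul 2 (by linear_combination e₂)⟩

theorem IsRegularTriple.exists_buchsbaumRim₁ (hx : IsRegularTriple x) {a b c d : R}
    (e₀ : x 0 * a + x 1 * b + x 2 * c = 0) (e₁ : x 0 * b + x 1 * c + x 2 * d = 0) :
    ∃ p q r s,
      a = x 2 ^ 2 * q + (x 1 ^ 2 - x 0 * x 2) * r - x 1 * x 2 * s ∧
      b = -x 2 ^ 2 * p - x 0 * x 1 * r + x 0 * x 2 * s ∧
      c = x 1 * x 2 * p - x 0 * x 2 * q + x 0 ^ 2 * r ∧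
      d = (x 0 * x 2 - x 1 ^ 2) * p + x 0 * x 1 * q - x 0 ^ 2 * s := by
  obtain ⟨α, β, γ, rfl, rfl, rfl⟩ := hx.exists_koszul e₁
  obtain ⟨α', β', γ', ha, hγ, hα⟩ := hx.exists_koszul (a := a - x 2 * γ)
    (b := x 1 * γ - x 2 * β) (c := x 2 * α) (by linear_combination e₀)
  obtain ⟨r₁, r₂, r₃, rfl, hα', hα⟩ := hx.exists_koszul (a := β') (b := -α') (c := -α)
    (by linear_combination -hα)
  obtain ⟨s₁, s₂, s₃, rfl, rfl, hβ⟩ := hx.exists_koszul (a := γ') (b := γ) (c := -(β + α'))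
    (by linear_combination hγ)
  obtain rfl : α = x 1 * r₁ - x 0 * r₂ := by linear_combination -hα
  obtain rfl : α' = x 0 * r₃ - x 2 * r₁ := by linear_combination -hα'
  obtain rfl : β = x 1 * s₁ - x 0 * s₂ - (x 0 * r₃ - x 2 * r₁) := by linear_combination -hβ
  exact ⟨r₁, s₁ + r₂, s₃, r₃ + s₂, by linear_combination ha, by ring, by ring, by ring⟩

theorem IsRegularTriple.exists_buchsbaumRim₂ (hx : IsRegularTriple x) {p q r s : R}
    (e₁ : -x 2 ^ 2 * p - x 0 * x 1 * r + x 0 * x 2 * s = 0)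
    (e₂ : x 1 * x 2 * p - x 0 * x 2 * q + x 0 ^ 2 * r = 0) :
    ∃ u v, p = x 0 * u ∧ q = x 1 * u + x 0 * v ∧ r = x 2 * v ∧ s = x 2 * u + x 1 * v := by
  obtain ⟨t, ht⟩ := hx.dvd_of_mul_eq_mul 0 2 (by decide) (x 2 * s - x 1 * r) (x 2 * p)
    (by linear_combination -e₁)
  obtain ⟨u, rfl⟩ := hx.dvd_of_mul_eq_mul 0 2 (by decide) _ _ ht
  have hs : x 2 * s - x 1 * r = x 2 ^ 2 * u := hx.eq_of_mul_eq_mul 0 (by linear_combination e₁)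
  obtain ⟨v, rfl⟩ := hx.dvd_of_mul_eq_mul 2 1 (by decide) (s - x 2 * u) r
    (by linear_combination -hs)
  have hq : x 0 * q = x 0 * (x 1 * u + x 0 * v) :=
    hx.eq_of_mul_eq_mul 2 (by linear_combination -e₂)
  exact ⟨u, v, rfl, hx.eq_of_mul_eq_mul 0 hq, rfl,
    hx.eq_of_mul_eq_mul 2 (by linear_combination hs)⟩

end Syzygies

section SmallResolutions

variable {R : Type*} [CommRing R]

theorem exact_mulVecLin {ι κ o : Type*} [Fintype κ] [Fintype o] {M : Matrix ι κ R}
    {N : Matrix κ o R} (hMN : M * N = 0) (h : ∀ v, M.mulVec v = 0 → ∃ w, N.mulVec w = v) :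
    Function.Exact N.mulVecLin M.mulVecLin := fun v => by
  refine ⟨h v, ?_⟩
  rintro ⟨w, rfl⟩
  simp [hMN]

open Matrix

variable {x : Fin 3 → R}

/-- The Koszul complex on `x 0, x 1, x 2`. -/
def koszul (hx : IsRegularTriple x) :
    Resolution R (Fin 1 → R) (Fin 3 → R) (Fin 3 → R) (Fin 1 → R) where
  d₁ := mulVecLin !![x 0, x 1, x 2]
  d₂ := mulVecLin !![0, -x 2, x 1; x 2, 0, -x 0; -x 1, x 0, 0]
  d₃ := mulVecLin !![x 0; x 1; x 2]
  exact₁ := by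
    refine exact_mulVecLin ?_ fun v hv => ?_
    · ext i j
      fin_cases i
      fin_cases j <;> simp [mul_apply, Fin.sum_univ_succ] <;> ring
    obtain ⟨α, β, γ, h₀, h₁, h₂⟩ := hx.exists_koszul (a := v 0) (b := v 1) (c := v 2)
      (by simpa [dotProduct, Fin.sum_univ_succ, add_assoc] using congrFun hv 0)
    refine ⟨![α, β, γ], ?_⟩
    ext i
    fin_cases i <;> simp [h₀, h₁, h₂] <;> ring
  exact₂ := by
    refine exact_mulVecLin ?_ fun v hv => ?_
    · ext i j
      fin_cases i <;> fin_cases j <;> simp [mul_apply, Fin.sum_univ_succ] <;> ring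
    obtain ⟨t, h₀, h₁, h₂⟩ := hx.exists_koszul₂ (a := v 0) (b := v 1) (c := v 2)
      (by simpa [dotProduct, Fin.sum_univ_succ, sub_eq_add_neg] using congrFun hv 1)
      (by simpa [dotProduct, Fin.sum_univ_succ] using congrFun hv 2)
    refine ⟨![t], ?_⟩
    ext i
    fin_cases i <;> simp [h₀, h₁, h₂, mul_comm]
  injective := (injective_iff_map_eq_zero _).mpr fun v hv => by
    ext i
    fin_cases i
    exact hx.eq_zero_of_mul_eq_zero 0 (v 0) (by simpa [vecHead, mul_comm] using congrFun hv 0)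

/-- A resolution of `R / ((x 0, x 1) ^ 2 + (x 2))`: the tensor product of the Hilbert–Burch
resolution of `R / (x 0, x 1) ^ 2` with the Koszul complex on `x 2`. -/
def squareResolution (hx : IsRegularTriple x) :
    Resolution R (Fin 1 → R) (Fin 4 → R) (Fin 5 → R) (Fin 2 → R) where
  d₁ := mulVecLin !![x 0 ^ 2, x 0 * x 1, x 1 ^ 2, x 2]
  d₂ := mulVecLin !![x 1, 0, -x 2, 0, 0; -x 0, x 1, 0, x 2, 0; 0, -x 0, 0, 0, x 2;
    0, 0, x 0 ^ 2, -(x 0 * x 1), -x 1 ^ 2]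
  d₃ := mulVecLin !![x 2, 0; 0, x 2; x 1, 0; x 0, -x 1; 0, x 0]
  exact₁ := by
    refine exact_mulVecLin ?_ fun v hv => ?_
    · ext i j
      fin_cases i
      fin_cases j <;> simp [mul_apply, Fin.sum_univ_succ] <;> ring
    obtain ⟨p, q, r, s, t, h₀, h₁, h₂, h₃⟩ :=
      hx.exists_square₁ (a := v 0) (b := v 1) (c := v 2) (d := v 3)
        (by simpa [dotProduct, Fin.sum_univ_succ, add_assoc] using congrFun hv 0)
    refine ⟨![p, q, r, s, t], ?_⟩
    ext i
    fin_cases i <;> simp [h₀, h₁, h₂, h₃] <;> ring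
  exact₂ := by
    refine exact_mulVecLin ?_ fun v hv => ?_
    · ext i j
      fin_cases i <;> fin_cases j <;> simp [mul_apply, Fin.sum_univ_succ] <;> ring
    obtain ⟨u, w, h₀, h₁, h₂, h₃, h₄⟩ :=
      hx.exists_square₂ (p := v 0) (q := v 1) (r := v 2) (s := v 3) (t := v 4)
        (by simpa [dotProduct, Fin.sum_univ_succ, sub_eq_add_neg] using congrFun hv 0)
        (by simpa [dotProduct, Fin.sum_univ_succ, add_assoc] using congrFun hv 1)
        (by simpa [dotProduct, Fin.sum_univ_succ] using congrFun hv 2)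
    refine ⟨![u, w], ?_⟩
    ext i
    fin_cases i <;> simp [h₀, h₁, h₂, h₃, h₄, mul_comm, sub_eq_add_neg]
  injective := (injective_iff_map_eq_zero _).mpr fun v hv => by
    ext i
    fin_cases i
    · exact hx.eq_zero_of_mul_eq_zero 2 (v 0) (by simpa [vecHead] using congrFun hv 0)
    · exact hx.eq_zero_of_mul_eq_zero 2 (v 1)
        (by simpa [vecHead, vecTail] using congrFun hv 1)

/-- The Buchsbaum–Rim complex of the matrix with rows `x 0, x 1, x 2, 0` and
`0, x 0, x 1, x 2`. -/
def buchsbaumRim (hx : IsRegularTriple x) :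
    Resolution R (Fin 2 → R) (Fin 4 → R) (Fin 4 → R) (Fin 2 → R) where
  d₁ := mulVecLin !![x 0, x 1, x 2, 0; 0, x 0, x 1, x 2]
  d₂ := mulVecLin !![0, x 2 ^ 2, x 1 ^ 2 - x 0 * x 2, -(x 1 * x 2);
    -x 2 ^ 2, 0, -(x 0 * x 1), x 0 * x 2; x 1 * x 2, -(x 0 * x 2), x 0 ^ 2, 0;
    x 0 * x 2 - x 1 ^ 2, x 0 * x 1, 0, -x 0 ^ 2]
  d₃ := mulVecLin !![x 0, 0; x 1, x 0; 0, x 2; x 2, x 1]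
  exact₁ := by
    refine exact_mulVecLin ?_ fun v hv => ?_
    · ext i j
      fin_cases i <;> fin_cases j <;> simp [mul_apply, Fin.sum_univ_succ] <;> ring
    obtain ⟨p, q, r, s, h₀, h₁, h₂, h₃⟩ :=
      hx.exists_buchsbaumRim₁ (a := v 0) (b := v 1) (c := v 2) (d := v 3)
        (by simpa [dotProduct, Fin.sum_univ_succ, add_assoc] using congrFun hv 0)
        (by simpa [dotProduct, Fin.sum_univ_succ, add_assoc] using congrFun hv 1)
    refine ⟨![p, q, r, s], ?_⟩
    ext i
    fin_cases i <;> simp [h₀, h₁, h₂, h₃] <;> ring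
  exact₂ := by
    refine exact_mulVecLin ?_ fun v hv => ?_
    · ext i j
      fin_cases i <;> fin_cases j <;> simp [mul_apply, Fin.sum_univ_succ] <;> ring
    obtain ⟨u, w, h₀, h₁, h₂, h₃⟩ :=
      hx.exists_buchsbaumRim₂ (p := v 0) (q := v 1) (r := v 2) (s := v 3)
        (by simpa [dotProduct, Fin.sum_univ_succ, sub_eq_add_neg, add_assoc] using congrFun hv 1)
        (by simpa [dotProduct, Fin.sum_univ_succ, sub_eq_add_neg, add_assoc] using congrFun hv 2)
    refine ⟨![u, w], ?_⟩
    ext i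
    fin_cases i <;> simp [h₀, h₁, h₂, h₃, mul_comm]
  injective := (injective_iff_map_eq_zero _).mpr fun v hv => by
    ext i
    fin_cases i
    · exact hx.eq_zero_of_mul_eq_zero 0 (v 0) (by simpa [vecHead] using congrFun hv 0)
    · exact hx.eq_zero_of_mul_eq_zero 2 (v 1)
        (by simpa [vecHead, vecTail] using congrFun hv 2)

variable [IsLocalRing R]

theorem hasResolution_koszul (hm : ∀ i, x i ∈ maximalIdeal R) (hx : IsRegularTriple x) :
    HasResolution x 1 3 1 := by
  refine ⟨3, koszul hx, ⟨?_, ?_, ?_⟩, fun i v => ⟨Pi.single i (x i * v 0), ?_⟩⟩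
  iterate 3 exact mulVecLin_mem_smul_top (by simp [Fin.forall_fin_succ, -mem_maximalIdeal, hm])
  ext j
  fin_cases j
  fin_cases i <;> simp [koszul] <;> ring

theorem hasResolution_square (hm : ∀ i, x i ∈ maximalIdeal R) (hx : IsRegularTriple x) :
    HasResolution x 1 4 2 := by
  have hm₂ i j : x i * x j ∈ maximalIdeal R := Ideal.mul_mem_left _ _ (hm j)
  refine ⟨5, squareResolution hx, ⟨?_, ?_, ?_⟩, fun i v =>
    ⟨![![v 0, 0, 0, 0], ![0, 0, v 0, 0], ![0, 0, 0, x 2 * v 0]] i, ?_⟩⟩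
  iterate 3
    exact mulVecLin_mem_smul_top (by simp [Fin.forall_fin_succ, -mem_maximalIdeal, hm, hm₂, sq])
  ext j
  fin_cases j
  fin_cases i <;> simp [squareResolution] <;> ring

theorem hasResolution_buchsbaumRim (hm : ∀ i, x i ∈ maximalIdeal R) (hx : IsRegularTriple x) :
    HasResolution x 2 4 2 := by
  have hm₂ i j : x i * x j ∈ maximalIdeal R := Ideal.mul_mem_left _ _ (hm j)
  refine ⟨4, buchsbaumRim hx, ⟨?_, ?_, ?_⟩, fun i v =>
    ⟨![![x 0 * v 0 - x 1 * v 1, x 0 * v 1, 0, 0],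
      ![x 2 * v 0, x 1 * v 0 - x 2 * v 1, x 1 * v 1 - x 0 * v 0, x 0 * v 1],
      ![0, 0, x 2 * v 0, x 2 * v 1 - x 1 * v 0]] i, ?_⟩⟩
  iterate 3
    exact mulVecLin_mem_smul_top
      (by simp [Fin.forall_fin_succ, -mem_maximalIdeal, hm, hm₂, sq, sub_mem])
  ext j
  fin_cases i <;> fin_cases j <;> simp [buchsbaumRim] <;> ring

theorem hasResolution_three_mul_add_four (hm : ∀ i, x i ∈ maximalIdeal R) (hx : IsRegularTriple x)
    (s : ℕ) : HasResolution x (s + 1) (3 * s + 4) (s + 2) ∧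
      HasResolution x (s + 2) (3 * s + 4) (s + 2) := by
  induction s with
  | zero => exact ⟨hasResolution_square hm hx, hasResolution_buchsbaumRim hm hx⟩
  | succ s ih =>
    exact ih.imp (·.add (hasResolution_koszul hm hx)) (·.add (hasResolution_koszul hm hx))

end SmallResolutions

section DGResolution

variable {R F₁ F₂ F₃ G₁ G₂ G₃ : Type*} [CommRing R]
  [AddCommGroup F₁] [Module R F₁] [AddCommGroup F₂] [Module R F₂]
  [AddCommGroup F₃] [Module R F₃]
  [AddCommGroup G₁] [Module R G₁] [AddCommGroup G₂] [Module R G₂]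
  [AddCommGroup G₃] [Module R G₃]

variable (R F₁ F₂ F₃) in
/-- A resolution of a cyclic module with a differential graded algebra structure. Only the product
of two elements of degree one is recorded: it determines the product `DGResolution.act` of elements
of degrees one and two, and associativity is automatic. -/
structure DGResolution extends Resolution R R F₁ F₂ F₃ where
  /-- The product of two elements of degree one. -/
  mul : F₁ →ₗ[R] F₁ →ₗ[R] F₂
  d₂_mul : ∀ a b, d₂ (mul a b) = d₁ a • b - d₁ b • a
  mul_isAlt : mul.IsAlt

namespace DGResolution

variable (F : DGResolution R F₁ F₂ F₃)

theorem exists_d₃_eq (a : F₁) (z : F₂) : ∃ s, F.d₃ s = F.d₁ a • z - F.mul a (F.d₂ z) :=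
  (F.exact₂ _).mp (by simp [F.d₂_mul, F.exact₁.apply_apply_eq_zero])

theorem exists_act : ∃ ν : F₁ →ₗ[R] F₂ →ₗ[R] F₃,
    ∀ a z, F.d₃ (ν a z) = F.d₁ a • z - F.mul a (F.d₂ z) := by
  choose k hk using F.exists_d₃_eq
  refine ⟨LinearMap.mk₂ R k ?_ ?_ ?_ ?_, hk⟩
  · intros; apply F.injective; simp only [map_add, hk, LinearMap.add_apply]; module
  · intros; apply F.injective; simp only [map_smul, hk, LinearMap.smul_apply, smul_eq_mul]; module
  · intros; apply F.injective; simp only [map_add, hk]; module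
  · intros; apply F.injective; simp only [map_smul, hk]; module

/-- The product of an element of degree one and an element of degree two. -/
noncomputable def act : F₁ →ₗ[R] F₂ →ₗ[R] F₃ :=
  F.exists_act.choose

theorem d₃_act (a : F₁) (z : F₂) : F.d₃ (F.act a z) = F.d₁ a • z - F.mul a (F.d₂ z) :=
  F.exists_act.choose_spec a z

variable {F} in
theorem act_eq_of_d₃_eq {a : F₁} {z : F₂} {s : F₃}
    (h : F.d₃ s = F.d₁ a • z - F.mul a (F.d₂ z)) : F.act a z = s :=
  F.injective (by rw [d₃_act, h])

theorem act_mul (a b c : F₁) : F.act c (F.mul a b) = F.act a (F.mul b c) := by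
  refine act_eq_of_d₃_eq ?_
  rw [d₃_act, d₂_mul, d₂_mul]
  simp only [map_sub, map_smul, ← F.mul_isAlt.neg b c, ← F.mul_isAlt.neg a c]
  module

/-- Transport of a differential graded resolution along isomorphisms of its modules. -/
def congr (e₁ : F₁ ≃ₗ[R] G₁) (e₂ : F₂ ≃ₗ[R] G₂) (e₃ : F₃ ≃ₗ[R] G₃) : DGResolution R G₁ G₂ G₃ where
  __ := F.toResolution.congr (.refl R R) e₁ e₂ e₃
  mul := (F.mul.compl₁₂ e₁.symm.toLinearMap e₁.symm.toLinearMap).compr₂ e₂.toLinearMap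
  d₂_mul a b := by simp [Resolution.congr, F.d₂_mul]
  mul_isAlt a := by simp [F.mul_isAlt.self_eq_zero]

theorem congr_act (e₁ : F₁ ≃ₗ[R] G₁) (e₂ : F₂ ≃ₗ[R] G₂) (e₃ : F₃ ≃ₗ[R] G₃) (a : G₁) (z : G₂) :
    (F.congr e₁ e₂ e₃).act a z = e₃ (F.act (e₁.symm a) (e₂.symm z)) :=
  act_eq_of_d₃_eq (by simp [congr, Resolution.congr, d₃_act])

end DGResolution

end DGResolution

section Lifting

variable {R P Q G : Type*} [CommRing R] [AddCommGroup P] [Module R P] [AddCommGroup Q] [Module R Q]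
  [AddCommGroup G] [Module R G]

theorem exists_linearMap_lift [Module.Projective R P] (θ : P →ₗ[R] Q) (D : G →ₗ[R] Q)
    (S : Submodule R G) (h : ∀ v, ∃ u ∈ S, D u = θ v) :
    ∃ q : P →ₗ[R] G, (∀ v, q v ∈ S) ∧ ∀ v, D (q v) = θ v := by
  obtain ⟨q, hq⟩ := Module.projective_lifting_property (D.submoduleMap S)
    (θ.codRestrict (S.map D) fun v => h v) (D.submoduleMap_surjective S)
  exact ⟨S.subtype ∘ₗ q, fun v => (q v).2, fun v => congrArg Subtype.val (LinearMap.congr_fun hq v)⟩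

theorem isAlt_of_basis {ι : Type*} (b : Module.Basis ι R P) {B : P →ₗ[R] P →ₗ[R] Q}
    (hself : ∀ i, B (b i) (b i) = 0) (hneg : ∀ i j, B (b i) (b j) = -B (b j) (b i)) : B.IsAlt := by
  have hskew : B = -B.flip := LinearMap.ext_basis b b hneg
  intro v
  induction b.mem_span v using Submodule.span_induction with
  | mem v hv => obtain ⟨i, rfl⟩ := hv; exact hself i
  | zero => simp
  | add v w _ _ hv hw => simp [hv, hw, LinearMap.congr_fun₂ hskew v w]
  | smul c v _ hv => simp [hv]

theorem exists_isAlt_lift [Module.Free R P] {θ : P →ₗ[R] P →ₗ[R] Q} (hθ : θ.IsAlt)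
    (D : G →ₗ[R] Q) (S : Submodule R G) (h : ∀ v w, ∃ u ∈ S, D u = θ v w) :
    ∃ γ : P →ₗ[R] P →ₗ[R] G, γ.IsAlt ∧ (∀ v w, γ v w ∈ S) ∧ ∀ v w, D (γ v w) = θ v w := by
  classical
  obtain ⟨ι, b⟩ := Module.Free.exists_basis R P
  let : LinearOrder ι := linearOrderOfSTO WellOrderingRel
  choose c hcS hc using h
  let s (i j : ι) : S :=
    if i < j then ⟨c (b i) (b j), hcS _ _⟩ else if j < i then -⟨c (b j) (b i), hcS _ _⟩ else 0
  have hs_neg i j : s i j = -s j i := by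
    rcases lt_trichotomy i j with hij | rfl | hij
    · simp [s, hij, hij.not_gt]
    · simp [s]
    · simp [s, hij, hij.not_gt]
  have hDs i j : D (s i j) = θ (b i) (b j) := by
    rcases lt_trichotomy i j with hij | rfl | hij
    · simp [s, hij, hc]
    · simp [s, hθ.self_eq_zero]
    · simp [s, hij, hij.not_gt, hc, hθ.neg]
  let γ : P →ₗ[R] P →ₗ[R] S := b.constr R fun i => b.constr R fun j => s i j
  have hγ i j : γ (b i) (b j) = s i j := by simp [γ]
  have hγ_alt : γ.IsAlt := isAlt_of_basis b (fun i => by simp [hγ, s]) fun i j => by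
    rw [hγ, hγ, hs_neg]
  have hDγ : γ.compr₂ (D ∘ₗ S.subtype) = θ := LinearMap.ext_basis b b fun i j => by simp [hγ, hDs]
  exact ⟨γ.compr₂ S.subtype, fun v => by simp [hγ_alt.self_eq_zero], fun v w => (γ v w).2,
    LinearMap.congr_fun₂ hDγ⟩

theorem exists_pow_smul_lift [IsNoetherianRing R] [Module.Finite R Q] (I : Ideal R)
    (f : P →ₗ[R] Q) (k : ℕ) :
    ∃ K, ∀ n ≥ K, ∀ v ∈ I ^ n • (⊤ : Submodule R Q), v ∈ LinearMap.range f →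
      ∃ u ∈ I ^ k • (⊤ : Submodule R P), f u = v := by
  obtain ⟨K, hK⟩ := Ideal.exists_pow_inf_eq_pow_smul I (LinearMap.range f)
  refine ⟨k + K, fun n hn v hv hvf => ?_⟩
  have hv' : v ∈ I ^ (k + K) • (⊤ : Submodule R Q) ⊓ LinearMap.range f :=
    ⟨smul_top_mono (Ideal.pow_le_pow_right hn) hv, hvf⟩
  rw [hK (k + K) (Nat.le_add_left K k), Nat.add_sub_cancel] at hv'
  have hmap : v ∈ (I ^ k • (⊤ : Submodule R P)).map f := by
    rw [Submodule.map_smul'', Submodule.map_top]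
    exact Submodule.smul_mono le_rfl inf_le_right hv'
  exact hmap

end Lifting

section LiftsThrough

variable {R G₀ G₁ G₂ G₃ : Type*} [CommRing R]
  [AddCommGroup G₀] [Module R G₀] [AddCommGroup G₁] [Module R G₁]
  [AddCommGroup G₂] [Module R G₂] [AddCommGroup G₃] [Module R G₃]

/-- Preimages under the differentials of `G` can be chosen with control: for elements divisible by
`I₁`, `I₂`, `I₃` they are divisible by `I₂`, `I₃`, `I₄` respectively. -/
structure Resolution.LiftsThrough (G : Resolution R G₀ G₁ G₂ G₃) (I₁ I₂ I₃ I₄ : Ideal R) :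
    Prop where
  le₁₂ : I₁ ≤ I₂
  le₂₃ : I₂ ≤ I₃
  le₃₄ : I₃ ≤ I₄
  exists_d₁_eq : ∀ v ∈ I₁ • (⊤ : Submodule R G₀), ∃ u ∈ I₂ • (⊤ : Submodule R G₁), G.d₁ u = v
  exists_d₂_eq : ∀ v ∈ I₂ • (⊤ : Submodule R G₁), G.d₁ v = 0 →
    ∃ u ∈ I₃ • (⊤ : Submodule R G₂), G.d₂ u = v
  mem_of_d₃_mem : ∀ u, G.d₃ u ∈ I₃ • (⊤ : Submodule R G₂) → u ∈ I₄ • (⊤ : Submodule R G₃)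

variable [IsNoetherianRing R]

theorem exists_span_pow_smul_top_le {s : Set R} (N : Submodule R G₀)
    (h : ∀ a ∈ s, ∃ k, ∀ v, a ^ k • v ∈ N) :
    ∃ k, Ideal.span s ^ k • (⊤ : Submodule R G₀) ≤ N := by
  have hrad : Ideal.span s ≤ (N.colon (⊤ : Submodule R G₀)).radical :=
    Ideal.span_le.mpr fun a ha => (h a ha).imp fun k hk => Submodule.mem_colon.mpr fun v _ => hk v
  obtain ⟨k, hk⟩ := Ideal.exists_pow_le_of_le_radical_of_fg hrad (IsNoetherian.noetherian _)
  exact ⟨k, Submodule.smul_le.mpr fun a ha v hv => Submodule.mem_colon.mp (hk ha) v hv⟩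

variable [Module.Finite R G₀] [Module.Finite R G₁] [Module.Finite R G₂]

theorem Resolution.exists_liftsThrough_pow (G : Resolution R G₀ G₁ G₂ G₃) {I J : Ideal R}
    (hIJ : I ≤ J) (h : ∃ k, I ^ k • (⊤ : Submodule R G₀) ≤ LinearMap.range G.d₁) :
    ∃ E K₂ K₃, G.LiftsThrough (I ^ E) (I ^ K₂) (I ^ K₃) J := by
  obtain ⟨k, hk⟩ := h
  obtain ⟨K₃, h₃⟩ := exists_pow_smul_lift I G.d₃ 1
  obtain ⟨K₂, h₂⟩ := exists_pow_smul_lift I G.d₂ (K₃ + 1)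
  obtain ⟨K₁, h₁⟩ := exists_pow_smul_lift I G.d₁ (K₂ + K₃ + 1)
  refine ⟨k + K₁ + K₂ + K₃ + 1, K₂ + K₃ + 1, K₃ + 1, Ideal.pow_le_pow_right (by omega),
    Ideal.pow_le_pow_right (by omega), (Ideal.pow_le_self (by omega)).trans hIJ, fun v hv => ?_,
    fun v hv hd => ?_, fun u hu => ?_⟩
  · exact h₁ _ (by omega) v hv (hk (smul_top_mono (Ideal.pow_le_pow_right (by omega)) hv))
  · exact h₂ _ (by omega) v hv ((G.exact₁ v).mp hd)
  · obtain ⟨u', hu', hd⟩ := h₃ _ (by omega) _ hu ⟨u, rfl⟩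
    rw [G.injective hd, pow_one] at hu'
    exact smul_top_mono hIJ hu'

end LiftsThrough

section Trimming

variable {R A F₁ F₂ F₃ G₀ G₁ G₂ G₃ : Type*} [CommRing R] [AddCommGroup A] [Module R A]
  [AddCommGroup F₁] [Module R F₁] [AddCommGroup F₂] [Module R F₂]
  [AddCommGroup F₃] [Module R F₃] [AddCommGroup G₀] [Module R G₀]
  [AddCommGroup G₁] [Module R G₁] [AddCommGroup G₂] [Module R G₂] [AddCommGroup G₃] [Module R G₃]

/-- The inclusion of `A` and, up to sign, the first differential of `G`, combined into the map
through which the first differential of a trimmed resolution factors. -/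
def trimMap (G : Resolution R G₀ G₁ G₂ G₃) (e : F₁ ≃ₗ[R] A × G₀) : A × G₁ →ₗ[R] F₁ :=
  e.symm.toLinearMap ∘ₗ LinearMap.prodMap LinearMap.id (-G.d₁)

@[simp]
theorem apply_trimMap (G : Resolution R G₀ G₁ G₂ G₃) (e : F₁ ≃ₗ[R] A × G₀) (v : A × G₁) :
    e (trimMap G e v) = (v.1, -G.d₁ v.2) := by
  simp [trimMap]

/-- The data for trimming: `F` resolves `R ⧸ I`, the module `F₁` is split as `A × G₀`, and the
generators of `I` belonging to `G₀` are to be replaced by their combinations with coefficients in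
the image of `G.d₁`. The maps `q₁`, `q₂` compare `F` with `G`; the map `γ` is the `G₂`-component of
the product on the trimmed resolution. -/
structure TrimmingData (F : DGResolution R F₁ F₂ F₃) (G : Resolution R G₀ G₁ G₂ G₃)
    (e : F₁ ≃ₗ[R] A × G₀) where
  /-- The comparison map in degree one. -/
  q₁ : F₂ →ₗ[R] G₁
  /-- The comparison map in degree two. -/
  q₂ : F₃ →ₗ[R] G₂
  /-- The component of the product in `G₂`. -/
  γ : A × G₁ →ₗ[R] A × G₁ →ₗ[R] G₂
  d₁_q₁ : ∀ f, G.d₁ (q₁ f) = (e (F.d₂ f)).2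
  d₂_q₂ : ∀ t, G.d₂ (q₂ t) = q₁ (F.d₃ t)
  d₂_γ : ∀ v w, G.d₂ (γ v w) = q₁ (F.mul (trimMap G e v) (trimMap G e w)) +
    (F.d₁ (trimMap G e v) • w.2 - F.d₁ (trimMap G e w) • v.2)
  γ_isAlt : γ.IsAlt

namespace TrimmingData

variable {F : DGResolution R F₁ F₂ F₃} {G : Resolution R G₀ G₁ G₂ G₃} {e : F₁ ≃ₗ[R] A × G₀}
  (D : TrimmingData F G e)

/-- The second differential of the trimmed resolution. -/
def d₂ : F₂ × G₂ →ₗ[R] A × G₁ :=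
  ((LinearMap.fst R A G₀ ∘ₗ e.toLinearMap ∘ₗ F.d₂).coprod 0).prod ((-D.q₁).coprod G.d₂)

/-- The third differential of the trimmed resolution. -/
def d₃ : F₃ × G₃ →ₗ[R] F₂ × G₂ :=
  (F.d₃.coprod 0).prod (D.q₂.coprod G.d₃)

theorem d₂_apply (z : F₂ × G₂) : D.d₂ z = ((e (F.d₂ z.1)).1, -D.q₁ z.1 + G.d₂ z.2) := by
  simp [d₂]

theorem d₃_apply (s : F₃ × G₃) : D.d₃ s = (F.d₃ s.1, D.q₂ s.1 + G.d₃ s.2) := by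
  simp [d₃]

theorem trimMap_d₂ (z : F₂ × G₂) : trimMap G e (D.d₂ z) = F.d₂ z.1 :=
  e.injective (by
    simp [d₂_apply, D.d₁_q₁, G.exact₁.apply_apply_eq_zero])

theorem exact_d₂_d₁ : Function.Exact D.d₂ (F.d₁ ∘ₗ trimMap G e) := by
  refine fun v => ⟨fun hv => ?_, ?_⟩
  · obtain ⟨f, hf⟩ := (F.exact₁ _).mp hv
    have hcycle : G.d₁ (v.2 + D.q₁ f) = 0 := by simp [D.d₁_q₁, hf]
    obtain ⟨w, hw⟩ := (G.exact₁ _).mp hcycle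
    exact ⟨(f, w), by simp [d₂_apply, hf, hw]⟩
  · rintro ⟨z, rfl⟩
    simp [trimMap_d₂, F.exact₁.apply_apply_eq_zero]

theorem exact_d₃_d₂ : Function.Exact D.d₃ D.d₂ := by
  refine fun z => ⟨fun hz => ?_, ?_⟩
  · have hz₁ : F.d₂ z.1 = 0 := by rw [← D.trimMap_d₂, hz, map_zero]
    obtain ⟨t, ht⟩ := (F.exact₂ _).mp hz₁
    have hcycle : G.d₂ (z.2 - D.q₂ t) = 0 := by
      rw [map_sub, D.d₂_q₂, ht, sub_eq_neg_add]
      exact congrArg Prod.snd (D.d₂_apply z ▸ hz)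
    obtain ⟨u, hu⟩ := (G.exact₂ _).mp hcycle
    exact ⟨(t, u), by simp [d₃_apply, ht, hu]⟩
  · rintro ⟨s, rfl⟩
    simp [d₃_apply, d₂_apply, D.d₂_q₂, F.exact₂.apply_apply_eq_zero,
      G.exact₂.apply_apply_eq_zero]

theorem injective_d₃ : Function.Injective D.d₃ := by
  rw [injective_iff_map_eq_zero]
  rintro ⟨t, u⟩ h
  simp only [d₃_apply, Prod.mk_eq_zero] at h
  obtain rfl : t = 0 := F.injective (by rw [h.1, map_zero])
  have hu : G.d₃ u = 0 := by simpa using h.2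
  rw [G.injective (hu.trans (map_zero _).symm)]
  rfl

/-- The trimmed resolution: the mapping cone of the comparison map from `F₃ → F₂ → F₁` to `G`, with
the summand `G₀` cancelled against its copy in `F₁` and `R` reattached in degree zero. -/
def toDGResolution : DGResolution R (A × G₁) (F₂ × G₂) (F₃ × G₃) where
  d₁ := F.d₁ ∘ₗ trimMap G e
  d₂ := D.d₂
  d₃ := D.d₃
  exact₁ := D.exact_d₂_d₁
  exact₂ := D.exact_d₃_d₂
  injective := D.injective_d₃
  mul := LinearMap.mk₂ R (fun v w => (F.mul (trimMap G e v) (trimMap G e w), D.γ v w))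
    (by intros; simp) (by intros; simp) (by intros; simp) (by intros; simp)
  d₂_mul v w := by ext <;> simp [d₂_apply, F.d₂_mul, D.d₂_γ]
  mul_isAlt v := by simp [F.mul_isAlt.self_eq_zero, D.γ_isAlt.self_eq_zero]

theorem toDGResolution_mul (v w : A × G₁) :
    D.toDGResolution.mul v w = (F.mul (trimMap G e v) (trimMap G e w), D.γ v w) :=
  rfl

/-- The comparison maps have entries in `I₂` and `I₃`, and the product has its `G₂`-component in
`I₃`. -/
structure IsBounded (I₂ I₃ : Ideal R) : Prop where
  q₁_mem : ∀ f, D.q₁ f ∈ I₂ • (⊤ : Submodule R G₁)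
  q₂_mem : ∀ t, D.q₂ t ∈ I₃ • (⊤ : Submodule R G₂)
  γ_mem : ∀ v w, D.γ v w ∈ I₃ • (⊤ : Submodule R G₂)

end TrimmingData

variable {F : DGResolution R F₁ F₂ F₃} {G : Resolution R G₀ G₁ G₂ G₃} {I₁ I₂ I₃ I : Ideal R}

theorem exists_trimmingData [Module.Free R A] [Module.Free R G₁] [Module.Free R F₂]
    [Module.Free R F₃] (e : F₁ ≃ₗ[R] A × G₀) (hF : F.HasEntriesIn I₁)
    (hG : G.LiftsThrough I₁ I₂ I₃ I) : ∃ D : TrimmingData F G e, D.IsBounded I₂ I₃ := by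
  obtain ⟨q₁, hq₁, hdq₁⟩ := exists_linearMap_lift
    (LinearMap.snd R A G₀ ∘ₗ e.toLinearMap ∘ₗ F.d₂) G.d₁ (I₂ • ⊤) fun f =>
      hG.exists_d₁_eq _ (map_mem_smul_top (LinearMap.snd R A G₀ ∘ₗ e.toLinearMap) (hF.d₂_mem f))
  simp only [LinearMap.comp_apply, LinearMap.snd_apply, LinearEquiv.coe_coe] at hdq₁
  obtain ⟨q₂, hq₂, hdq₂⟩ := exists_linearMap_lift (q₁ ∘ₗ F.d₃) G.d₂ (I₃ • ⊤) fun t =>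
    hG.exists_d₂_eq _ (hq₁ _) (by simp [hdq₁, F.exact₂.apply_apply_eq_zero])
  let θ : A × G₁ →ₗ[R] A × G₁ →ₗ[R] G₁ :=
    LinearMap.mk₂ R (fun v w => q₁ (F.mul (trimMap G e v) (trimMap G e w)) +
        (F.d₁ (trimMap G e v) • w.2 - F.d₁ (trimMap G e w) • v.2))
      (by intros; simp only [map_add, LinearMap.add_apply, Prod.snd_add]; module)
      (by intros; simp only [map_smul, LinearMap.smul_apply, Prod.smul_snd, smul_eq_mul]; module)
      (by intros; simp only [map_add, Prod.snd_add]; module)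
      (by intros; simp only [map_smul, Prod.smul_snd, smul_eq_mul]; module)
  have hθ_alt : θ.IsAlt := fun v => by simp [θ, F.mul_isAlt.self_eq_zero]
  have hd₁θ v w : G.d₁ (θ v w) = 0 := by simp [θ, hdq₁, F.d₂_mul]
  have hθ_mem v w : θ v w ∈ I₂ • (⊤ : Submodule R G₁) := by
    have hd₁ u : F.d₁ (trimMap G e u) ∈ I₂ := hG.le₁₂ (mem_smul_top_self.mp (hF.d₁_mem _))
    exact add_mem (hq₁ _) (sub_mem (Submodule.smul_mem_smul (hd₁ v) trivial)
      (Submodule.smul_mem_smul (hd₁ w) trivial))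
  obtain ⟨γ, hγ_alt, hγ, hdγ⟩ := exists_isAlt_lift hθ_alt G.d₂ (I₃ • ⊤) fun v w =>
    hG.exists_d₂_eq _ (hθ_mem v w) (hd₁θ v w)
  exact ⟨⟨q₁, q₂, γ, hdq₁, hdq₂, hdγ, hγ_alt⟩, hq₁, hq₂, hγ⟩

namespace TrimmingData

variable {e : F₁ ≃ₗ[R] A × G₀} {D : TrimmingData F G e}

theorem IsBounded.hasEntriesIn (hD : D.IsBounded I₂ I₃) (hF : F.HasEntriesIn I₁)
    (hG : G.HasEntriesIn I) (hL : G.LiftsThrough I₁ I₂ I₃ I) :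
    D.toDGResolution.HasEntriesIn I where
  d₁_mem v := smul_top_mono (hL.le₁₂.trans (hL.le₂₃.trans hL.le₃₄)) (hF.d₁_mem _)
  d₂_mem z := by
    have h₁ := map_mem_smul_top (LinearMap.fst R A G₀ ∘ₗ e.toLinearMap) (hF.d₂_mem z.1)
    exact D.d₂_apply z ▸ mem_smul_top_prod.mpr
      ⟨smul_top_mono (hL.le₁₂.trans (hL.le₂₃.trans hL.le₃₄)) h₁,
        add_mem (neg_mem (smul_top_mono (hL.le₂₃.trans hL.le₃₄) (hD.q₁_mem _))) (hG.d₂_mem _)⟩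
  d₃_mem s := D.d₃_apply s ▸ mem_smul_top_prod.mpr
    ⟨smul_top_mono (hL.le₁₂.trans (hL.le₂₃.trans hL.le₃₄)) (hF.d₃_mem _),
      add_mem (smul_top_mono hL.le₃₄ (hD.q₂_mem _)) (hG.d₃_mem _)⟩

theorem IsBounded.mul_mem (hD : D.IsBounded I₂ I₃) (hI : I₃ ≤ I)
    (hmul : ∀ a b, F.mul a b ∈ I • (⊤ : Submodule R F₂)) (v w : A × G₁) :
    D.toDGResolution.mul v w ∈ I • (⊤ : Submodule R (F₂ × G₂)) :=
  mem_smul_top_prod.mpr ⟨hmul _ _, smul_top_mono hI (hD.γ_mem v w)⟩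

theorem fst_act (v : A × G₁) (z : F₂ × G₂) :
    (D.toDGResolution.act v z).1 = F.act (trimMap G e v) z.1 := by
  refine (DGResolution.act_eq_of_d₃_eq ?_).symm
  have h := congrArg Prod.fst (D.toDGResolution.d₃_act v z)
  change (D.d₃ _).1 = (F.d₁ (trimMap G e v) • z - D.toDGResolution.mul v (D.d₂ z)).1 at h
  simpa [d₃_apply, toDGResolution_mul, trimMap_d₂] using h

theorem IsBounded.snd_act_mem (hD : D.IsBounded I₂ I₃) (hF : F.HasEntriesIn I₁)
    (hL : G.LiftsThrough I₁ I₂ I₃ I) (v : A × G₁) (z : F₂ × G₂) :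
    (D.toDGResolution.act v z).2 ∈ I • (⊤ : Submodule R G₃) := by
  set s := D.toDGResolution.act v z
  have hds : D.q₂ s.1 + G.d₃ s.2 = F.d₁ (trimMap G e v) • z.2 - D.γ v (D.d₂ z) := by
    have h := congrArg Prod.snd (D.toDGResolution.d₃_act v z)
    exact (congrArg Prod.snd (D.d₃_apply s)).symm.trans h
  have hd₁ : F.d₁ (trimMap G e v) ∈ I₃ :=
    hL.le₂₃ (hL.le₁₂ (mem_smul_top_self.mp (hF.d₁_mem _)))
  refine hL.mem_of_d₃_mem _ (eq_sub_of_add_eq' hds ▸ sub_mem (sub_mem ?_ ?_) (hD.q₂_mem _))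
  · exact Submodule.smul_mem_smul hd₁ trivial
  · exact hD.γ_mem _ _

theorem IsBounded.act_sub_mem (hD : D.IsBounded I₂ I₃) (hF : F.HasEntriesIn I₁)
    (hG : G.HasEntriesIn I) (hL : G.LiftsThrough I₁ I₂ I₃ I) (v : A × G₁) (z : F₂ × G₂) :
    D.toDGResolution.act v z - (F.act (e.symm (v.1, 0)) z.1, 0) ∈
      I • (⊤ : Submodule R (F₃ × G₃)) := by
  have htrim : trimMap G e v - e.symm (v.1, 0) ∈ I • (⊤ : Submodule R F₁) := by
    rw [trimMap, LinearMap.comp_apply, LinearEquiv.coe_coe, ← map_sub]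
    exact map_mem_smul_top e.symm.toLinearMap
      (mem_smul_top_prod.mpr ⟨by simp, by simpa using hG.d₁_mem v.2⟩)
  refine mem_smul_top_prod.mpr ⟨?_, by simpa using hD.snd_act_mem hF hL v z⟩
  simpa [fst_act] using map_mem_smul_top (F.act.flip z.1) htrim

end TrimmingData

end Trimming

section Tournament

variable {p : ℕ} {i j l : Fin (2 * p + 1)}

/-- The cyclic tournament on an odd number of vertices: `i` dominates `j` if the distance from `i`
to `j`, measured in the direction of the cycle, is odd. -/
def Dominates (i j : Fin (2 * p + 1)) : Prop :=
  (i < j ∧ (j - i : ℕ) % 2 = 1) ∨ (j < i ∧ (i - j : ℕ) % 2 = 0)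

/-- The oriented triangles of the cyclic tournament. -/
def IsTriangle (i j l : Fin (2 * p + 1)) : Prop :=
  Dominates i j ∧ Dominates j l ∧ Dominates l i

instance : Decidable (Dominates i j) := inferInstanceAs (Decidable (_ ∨ _))

instance : Decidable (IsTriangle i j l) := inferInstanceAs (Decidable (_ ∧ _))

/-- The orientation of the triangle on three vertices, and zero if they form no triangle. -/
def orientation (i j l : Fin (2 * p + 1)) : ℤ :=
  if IsTriangle i j l then 1 else if IsTriangle j i l then -1 else 0

theorem val_add_one_eq (k : Fin (2 * p + 1)) :
    ((k + 1 : Fin _) : ℕ) = k + 1 ∧ (k : ℕ) < 2 * p ∨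
      (k : ℕ) = 2 * p ∧ ((k + 1 : Fin _) : ℕ) = 0 := by
  rw [Fin.val_add_one]
  split_ifs with hk
  · exact .inr ⟨by simp [hk], rfl⟩
  · exact .inl ⟨rfl, Fin.val_lt_last hk⟩

theorem Dominates.asymm (h : Dominates i j) : ¬ Dominates j i := by
  unfold Dominates at *; omega

theorem not_dominates_self : ¬ Dominates i i := fun h => h.asymm h

theorem dominates_or_dominates (h : i ≠ j) : Dominates i j ∨ Dominates j i := by
  unfold Dominates; omega

theorem dominates_add_one (hp : 1 ≤ p) (k : Fin (2 * p + 1)) : Dominates k (k + 1) := by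
  have := val_add_one_eq k
  unfold Dominates; omega

theorem IsTriangle.rotate (h : IsTriangle i j l) : IsTriangle j l i := ⟨h.2.1, h.2.2, h.1⟩

theorem isTriangle_rotate : IsTriangle i j l ↔ IsTriangle j l i :=
  ⟨.rotate, fun h => h.rotate.rotate⟩

theorem orientation_rotate : orientation i j l = orientation j l i := by
  have hswap : IsTriangle j i l ↔ IsTriangle l j i := isTriangle_rotate.trans isTriangle_rotate
  simp only [orientation, ← hswap, ← isTriangle_rotate (i := i)]

theorem orientation_swap : orientation i j l = -orientation j i l := by
  have hasymm : IsTriangle i j l → ¬ IsTriangle j i l := fun h h' => h.1.asymm h'.1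
  unfold orientation
  split_ifs <;> tauto

theorem orientation_self : orientation i i l = 0 := by
  have := orientation_swap (i := i) (j := i) (l := l)
  omega

theorem isTriangle_or_of_orientation_ne_zero (h : orientation i j l ≠ 0) :
    IsTriangle i j l ∨ IsTriangle j i l := by
  by_contra! hc
  simp [orientation, hc] at h

-- The vertices completing the edge from `i` to `j` to a triangle are `j + 1, j + 3, …, i - 1`.
theorem isTriangle_add_one_iff (hp : 1 ≤ p) (hij : Dominates i j) (k : Fin (2 * p + 1)) :
    IsTriangle i j (k + 1) ↔ k = j ∨ k ≠ i ∧ IsTriangle i j (k - 1) := by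
  have hk := val_add_one_eq k
  have hk' := val_add_one_eq (k - 1)
  rw [sub_add_cancel] at hk'
  generalize k + 1 = a, k - 1 = b at hk hk'
  unfold IsTriangle Dominates at *
  rcases hij with hij | hij <;> rcases hk with hk | hk <;> rcases hk' with hk' | hk' <;> omega

theorem isTriangle_sub_one_iff (hp : 1 ≤ p) (hij : Dominates i j) (k : Fin (2 * p + 1)) :
    IsTriangle i j (k - 1) ↔ k = i ∨ k ≠ j ∧ IsTriangle i j (k + 1) := by
  have hk := val_add_one_eq k
  have hk' := val_add_one_eq (k - 1)
  rw [sub_add_cancel] at hk'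
  generalize k + 1 = a, k - 1 = b at hk hk'
  unfold IsTriangle Dominates at *
  rcases hij with hij | hij <;> rcases hk with hk | hk <;> rcases hk' with hk' | hk' <;> omega

theorem orientation_add_one_sub_orientation_sub_one (hp : 1 ≤ p) (i j k : Fin (2 * p + 1)) :
    orientation i j (k + 1) - orientation i j (k - 1) =
      (if j = k then 1 else 0) - (if i = k then 1 else 0) := by
  wlog hij : Dominates i j generalizing i j
  · obtain rfl | hne := eq_or_ne i j
    · simp [orientation_self]
    · have := this j i ((dominates_or_dominates hne).resolve_left hij)
      rw [orientation_swap, orientation_swap (l := k - 1)]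
      linarith
  have orientation_eq l : orientation i j l = if IsTriangle i j l then 1 else 0 := by
    rw [orientation, if_neg (c := IsTriangle j i l) fun h => hij.asymm h.1]
  have hij' : i ≠ j := by rintro rfl; exact not_dominates_self hij
  have hadd := isTriangle_add_one_iff hp hij k
  have hsub := isTriangle_sub_one_iff hp hij k
  rw [orientation_eq, orientation_eq]
  grind

theorem IsTriangle.dominates_or (h : IsTriangle i j l) (e : Fin (2 * p + 1)) :
    Dominates i e ∨ Dominates j e ∨ Dominates l e := by
  unfold IsTriangle Dominates at *
  rcases h with ⟨h₁ | h₁, h₂ | h₂, h₃ | h₃⟩ <;> omega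

theorem exists_dominates_and_dominates_or_eq_add_one (hij : Dominates i j) :
    (∃ e, Dominates i e ∧ Dominates j e) ∨ j = i + 1 := by
  by_cases hj : j = i + 1
  · exact .inr hj
  · refine .inl ⟨i + 1, ?_⟩
    have hi := val_add_one_eq i
    unfold Dominates at *; omega

theorem IsTriangle.exists_dominated_twice (hp : 2 ≤ p) (h : IsTriangle i j l) :
    ∃ e, (Dominates i e ∧ Dominates j e) ∨ (Dominates j e ∧ Dominates l e) ∨
      (Dominates l e ∧ Dominates i e) := by
  obtain ⟨e, he⟩ | rfl := exists_dominates_and_dominates_or_eq_add_one h.1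
  · exact ⟨e, .inl he⟩
  obtain ⟨e, he⟩ | rfl := exists_dominates_and_dominates_or_eq_add_one h.2.1
  · exact ⟨e, .inr (.inl he)⟩
  obtain ⟨e, he⟩ | hi := exists_dominates_and_dominates_or_eq_add_one h.2.2
  · exact ⟨e, .inr (.inr he)⟩
  have h₁ := val_add_one_eq i
  have h₂ := val_add_one_eq (i + 1)
  have h₃ := val_add_one_eq (i + 1 + 1)
  rw [← hi] at h₃
  omega

end Tournament

section Pfaffian

open scoped nonZeroDivisors

variable {R : Type*} [CommRing R] {p : ℕ} (u : Fin (2 * p + 1) → R) {I : Ideal R}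

/-- The indicator function of the relation `Dominates`. -/
def arc (i e : Fin (2 * p + 1)) : ℕ := if Dominates i e then 1 else 0

/-- The Pfaffian of the matrix of `cyclicMap u` without its row and column `i`. -/
def pfaffian (i : Fin (2 * p + 1)) : R := ∏ e, u e ^ arc i e

/-- The Pfaffian of the matrix of `cyclicMap u` without its rows and columns `i`, `j` and `l`,
with a sign depending on their order. Truncated subtraction matters only if the three vertices
form no triangle, in which case the Pfaffian vanishes. -/
def triplePfaffian (i j l : Fin (2 * p + 1)) : R :=
  orientation i j l * ∏ e, u e ^ (arc i e + arc j e + arc l e - 1)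

theorem triplePfaffian_rotate (i j l : Fin (2 * p + 1)) :
    triplePfaffian u i j l = triplePfaffian u j l i := by
  rw [triplePfaffian, triplePfaffian, orientation_rotate]
  simp only [add_comm (arc j _ + arc l _), add_assoc]

theorem triplePfaffian_swap (i j l : Fin (2 * p + 1)) :
    triplePfaffian u i j l = -triplePfaffian u j i l := by
  rw [triplePfaffian, triplePfaffian, orientation_swap, Int.cast_neg, neg_mul]
  simp only [add_comm (arc i _)]

theorem triplePfaffian_self (i l : Fin (2 * p + 1)) : triplePfaffian u i i l = 0 := by
  simp [triplePfaffian, orientation_self]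

theorem arc_add_arc_add_one (hp : 1 ≤ p) (k e : Fin (2 * p + 1)) :
    arc k e + (if e = k then 1 else 0) + arc (k + 1) e = 1 := by
  have hk := val_add_one_eq k
  unfold arc
  split_ifs <;> unfold Dominates at * <;> omega

theorem pfaffian_mul_mul_pfaffian (hp : 1 ≤ p) (k : Fin (2 * p + 1)) :
    pfaffian u k * u k * pfaffian u (k + 1) = ∏ e, u e := by
  have hk : u k = ∏ e, u e ^ (if e = k then 1 else 0) := by simp [pow_ite]
  rw [hk, pfaffian, pfaffian, ← Finset.prod_mul_distrib, ← Finset.prod_mul_distrib]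
  simp only [← pow_add, arc_add_arc_add_one hp, pow_one]

theorem prod_mul_triplePfaffian (i j l : Fin (2 * p + 1)) :
    (∏ e, u e) * triplePfaffian u i j l =
      orientation i j l * (pfaffian u i * pfaffian u j * pfaffian u l) := by
  obtain h | h := eq_or_ne (orientation i j l) 0
  · simp [triplePfaffian, h]
  have hpos e : 0 < arc i e + arc j e + arc l e := by
    have hcover : Dominates i e ∨ Dominates j e ∨ Dominates l e := by
      obtain h | h := isTriangle_or_of_orientation_ne_zero h <;> have := h.dominates_or e <;> tauto
    unfold arc
    split_ifs <;> first | omega | tauto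
  rw [triplePfaffian, mul_left_comm]
  simp only [pfaffian, ← Finset.prod_mul_distrib, ← pow_add]
  congr 1
  exact Finset.prod_congr rfl fun e _ => mul_pow_sub_one (hpos e).ne' _

theorem prod_pow_mem {e : Fin (2 * p + 1)} (f : Fin (2 * p + 1) → ℕ) (hf : 0 < f e)
    (hu : u e ∈ I) : ∏ e, u e ^ f e ∈ I :=
  I.mem_of_dvd (Finset.dvd_prod_of_mem _ (Finset.mem_univ e)) (I.pow_mem_of_mem hu _ hf)

theorem triplePfaffian_mem (hp : 2 ≤ p) (hu : ∀ e, u e ∈ I) (i j l : Fin (2 * p + 1)) :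
    triplePfaffian u i j l ∈ I := by
  obtain h | h := eq_or_ne (orientation i j l) 0
  · simp [triplePfaffian, h]
  obtain ⟨e, he⟩ : ∃ e, (Dominates i e ∧ Dominates j e) ∨ (Dominates j e ∧ Dominates l e) ∨
      (Dominates l e ∧ Dominates i e) := by
    obtain h | h := isTriangle_or_of_orientation_ne_zero h <;>
      obtain ⟨e, he⟩ := h.exists_dominated_twice hp <;> exact ⟨e, by tauto⟩
  refine I.mul_mem_left _ (prod_pow_mem u _ (e := e) ?_ (hu e))
  unfold arc
  obtain h | h | h := he <;> simp only [h, if_true] <;> omega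

theorem pfaffian_mem (hp : 1 ≤ p) (hu : ∀ e, u e ∈ I) (i : Fin (2 * p + 1)) :
    pfaffian u i ∈ I :=
  prod_pow_mem u _ (e := i + 1) (by simp [arc, dominates_add_one hp]) (hu _)

variable {u}

theorem pfaffian_mem_nonZeroDivisors (hu : ∀ e, u e ∈ R⁰) (i : Fin (2 * p + 1)) :
    pfaffian u i ∈ R⁰ :=
  prod_mem fun e _ => pow_mem (hu e) _

theorem mul_triplePfaffian_sub (hp : 1 ≤ p) (hu : ∀ e, u e ∈ R⁰) (i j k : Fin (2 * p + 1)) :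
    u k * triplePfaffian u i j (k + 1) - u (k - 1) * triplePfaffian u i j (k - 1) =
      pfaffian u i * (if j = k then 1 else 0) - pfaffian u j * (if i = k then 1 else 0) := by
  have hnext := pfaffian_mul_mul_pfaffian u hp k
  have hprev := pfaffian_mul_mul_pfaffian u hp (k - 1)
  rw [sub_add_cancel] at hprev
  have hor : ((orientation i j (k + 1) : ℤ) : R) - orientation i j (k - 1) =
      (if j = k then 1 else 0) - (if i = k then 1 else 0) := by
    simpa using congrArg (Int.cast (R := R)) (orientation_add_one_sub_orientation_sub_one hp i j k)
  have hpf (t : Fin (2 * p + 1)) : (if t = k then (1 : R) else 0) * pfaffian u k =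
      (if t = k then 1 else 0) * pfaffian u t := by
    split_ifs with h <;> simp [h]
  have hprod : ∏ e, u e ∈ R⁰ := prod_mem fun e _ => hu e
  refine (mul_cancel_left_mem_nonZeroDivisors
    (mul_mem (pfaffian_mem_nonZeroDivisors hu k) hprod)).mp ?_
  linear_combination pfaffian u k * u k * prod_mul_triplePfaffian u i j (k + 1)
    - pfaffian u k * u (k - 1) * prod_mul_triplePfaffian u i j (k - 1)
    + orientation i j (k + 1) * pfaffian u i * pfaffian u j * hnext
    - orientation i j (k - 1) * pfaffian u i * pfaffian u j * hprev
    + (∏ e, u e) * (pfaffian u i * pfaffian u j * hor - pfaffian u i * hpf j + pfaffian u j * hpf i)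

theorem mul_pfaffian_add_one (hp : 1 ≤ p) (hu : ∀ e, u e ∈ R⁰) (k : Fin (2 * p + 1)) :
    u k * pfaffian u (k + 1) = u (k - 1) * pfaffian u (k - 1) := by
  have hprev := pfaffian_mul_mul_pfaffian u hp (k - 1)
  rw [sub_add_cancel] at hprev
  refine (mul_cancel_left_mem_nonZeroDivisors (pfaffian_mem_nonZeroDivisors hu k)).mp ?_
  linear_combination pfaffian_mul_mul_pfaffian u hp k - hprev

variable (u)

/-- The alternating map with nonzero entries `u k` in the positions `(k, k + 1)`. -/
def cyclicMap : (Fin (2 * p + 1) → R) →ₗ[R] (Fin (2 * p + 1) → R) :=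
  LinearMap.pi fun k => u k • LinearMap.proj (k + 1) - u (k - 1) • LinearMap.proj (k - 1)

theorem cyclicMap_apply (v : Fin (2 * p + 1) → R) (k : Fin (2 * p + 1)) :
    cyclicMap u v k = u k * v (k + 1) - u (k - 1) * v (k - 1) := rfl

theorem cyclicMap_single (l : Fin (2 * p + 1)) :
    cyclicMap u (Pi.single l 1) =
      u (l - 1) • Pi.single (l - 1) 1 - u l • Pi.single (l + 1) 1 := by
  ext k
  have hsub : k + 1 = l ↔ k = l - 1 := eq_sub_iff_add_eq.symm
  have hadd : k - 1 = l ↔ k = l + 1 := sub_eq_iff_eq_add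
  simp only [cyclicMap_apply, Pi.single_apply, hsub, hadd, Pi.sub_apply, Pi.smul_apply, smul_eq_mul]
  congr 1 <;> split_ifs with h <;> simp [h]

/-- The linear form whose coefficients are the Pfaffians of `cyclicMap u`. -/
def pfaffianForm : (Fin (2 * p + 1) → R) →ₗ[R] R :=
  Fintype.linearCombination R (pfaffian u)

/-- The bilinear product with structure constants `triplePfaffian u`. -/
def pfaffianMul : (Fin (2 * p + 1) → R) →ₗ[R] (Fin (2 * p + 1) → R) →ₗ[R] (Fin (2 * p + 1) → R) :=
  Fintype.linearCombination R fun i => Fintype.linearCombination R (triplePfaffian u i)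

theorem pfaffianForm_single (i : Fin (2 * p + 1)) :
    pfaffianForm u (Pi.single i 1) = pfaffian u i := by
  simp [pfaffianForm]

theorem pfaffianMul_single (i j : Fin (2 * p + 1)) :
    pfaffianMul u (Pi.single i 1) (Pi.single j 1) = triplePfaffian u i j := by
  simp [pfaffianMul]

theorem pfaffianMul_isAlt : (pfaffianMul u).IsAlt := by
  refine isAlt_of_basis (Pi.basisFun R _) (fun i => ?_) (fun i j => ?_) <;> ext l <;>
    simp only [Pi.basisFun_apply, pfaffianMul_single]
  · exact triplePfaffian_self u i l
  · exact triplePfaffian_swap u i j l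

variable {u}

theorem cyclicMap_pfaffian (hp : 1 ≤ p) (hu : ∀ e, u e ∈ R⁰) : cyclicMap u (pfaffian u) = 0 := by
  ext k
  rw [cyclicMap_apply, mul_pfaffian_add_one hp hu, sub_self, Pi.zero_apply]

theorem pfaffianForm_cyclicMap (hp : 1 ≤ p) (hu : ∀ e, u e ∈ R⁰) (v : Fin (2 * p + 1) → R) :
    pfaffianForm u (cyclicMap u v) = 0 := by
  suffices h : pfaffianForm u ∘ₗ cyclicMap u = 0 from LinearMap.congr_fun h v
  refine (Pi.basisFun R _).ext fun l => ?_
  simp only [LinearMap.comp_apply, Pi.basisFun_apply, cyclicMap_single, map_sub, map_smul,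
    pfaffianForm_single, smul_eq_mul, mul_pfaffian_add_one hp hu, sub_self, LinearMap.zero_apply]

theorem cyclicMap_pfaffianMul (hp : 1 ≤ p) (hu : ∀ e, u e ∈ R⁰) (a b : Fin (2 * p + 1) → R) :
    cyclicMap u (pfaffianMul u a b) = pfaffianForm u a • b - pfaffianForm u b • a := by
  suffices h : (pfaffianMul u).compr₂ (cyclicMap u) =
      LinearMap.lsmul R _ ∘ₗ pfaffianForm u - (LinearMap.lsmul R _ ∘ₗ pfaffianForm u).flip from
    LinearMap.congr_fun₂ h a b
  refine LinearMap.ext_basis (Pi.basisFun R _) (Pi.basisFun R _) fun i j => ?_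
  ext k
  simp [pfaffianMul_single, pfaffianForm_single, cyclicMap_apply, mul_triplePfaffian_sub hp hu,
    Pi.single_apply, eq_comm (a := k)]

theorem dotProduct_smul_pfaffian (hp : 1 ≤ p) (hu : ∀ e, u e ∈ R⁰) (a f : Fin (2 * p + 1) → R) :
    (a ⬝ᵥ f) • pfaffian u = pfaffianForm u a • f - pfaffianMul u a (cyclicMap u f) := by
  suffices h : (dotProductBilin R R).compr₂ (LinearMap.toSpanSingleton R _ (pfaffian u)) =
      LinearMap.lsmul R _ ∘ₗ pfaffianForm u - (pfaffianMul u).compl₂ (cyclicMap u) from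
    LinearMap.congr_fun₂ h a f
  refine LinearMap.ext_basis (Pi.basisFun R _) (Pi.basisFun R _) fun i l => ?_
  ext q
  have hq := mul_triplePfaffian_sub hp hu q i l
  rw [triplePfaffian_rotate u q, triplePfaffian_rotate u q] at hq
  simp only [mul_ite, mul_one, mul_zero] at hq
  simp only [Pi.basisFun_apply, LinearMap.compr₂_apply, dotProductBilin_apply_apply,
    dotProduct_single, Pi.single_apply, eq_comm (a := l), mul_one, LinearMap.toSpanSingleton_apply,
    Pi.smul_apply, smul_eq_mul, ite_mul, one_mul, zero_mul, LinearMap.sub_apply,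
    LinearMap.comp_apply, pfaffianForm_single, LinearMap.lsmul_apply, LinearMap.compl₂_apply,
    cyclicMap_single, map_sub, map_smul, pfaffianMul_single, Pi.sub_apply, mul_ite, mul_zero]
  linear_combination -hq

end Pfaffian

section Acyclicity

variable {R : Type*} [CommRing R] {x : Fin 3 → R} {ι κ : Type*}

theorem IsRegularTriple.eq_of_smul_eq_smul (hx : IsRegularTriple x) (i : Fin 3) {v w : ι → R}
    (h : x i • v = x i • w) : v = w :=
  funext fun j => hx.eq_of_mul_eq_mul i (congrFun h j)

theorem IsRegularTriple.mem_range_of_smul_mem_range (hx : IsRegularTriple x)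
    {g : R →ₗ[R] (ι → R)} (hg : Function.Injective g) {v : ι → R}
    (h₀ : x 0 • v ∈ LinearMap.range g) (h₁ : x 1 • v ∈ LinearMap.range g) :
    v ∈ LinearMap.range g := by
  obtain ⟨s, hs⟩ := h₀
  obtain ⟨t, ht⟩ := h₁
  obtain ⟨c, rfl⟩ := hx.dvd_of_mul_eq_mul 0 1 (by decide) t s (hg (by
    rw [← smul_eq_mul, ← smul_eq_mul, map_smul, map_smul, hs, ht, smul_comm]))
  exact ⟨c, hx.eq_of_smul_eq_smul 0 (by rw [← hs, ← smul_eq_mul, map_smul])⟩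

theorem IsRegularTriple.mem_range_of_smul_mem_range_of_exact (hx : IsRegularTriple x)
    {g : R →ₗ[R] (ι → R)} {f : (ι → R) →ₗ[R] (κ → R)} (hg : Function.Injective g)
    (hgf : Function.Exact g f) {v : κ → R} (h : ∀ i, x i • v ∈ LinearMap.range f) :
    v ∈ LinearMap.range f := by
  choose w hw using h
  have hcycle i j : ∃ s, g s = x i • w j - x j • w i :=
    (hgf _).mp (by rw [map_sub, map_smul, map_smul, hw, hw, smul_comm, sub_self])
  obtain ⟨s₀₁, h₀₁⟩ := hcycle 0 1
  obtain ⟨s₀₂, h₀₂⟩ := hcycle 0 2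
  obtain ⟨s₁₂, h₁₂⟩ := hcycle 1 2
  have hrel : x 0 * s₁₂ + x 1 * -s₀₂ + x 2 * s₀₁ = 0 := hg (by
    simp only [← smul_eq_mul, map_add, map_smul, map_neg, map_zero, h₀₁, h₀₂, h₁₂]
    module)
  obtain ⟨α, β, γ, -, -, hs₀₁⟩ := hx.exists_koszul hrel
  have hdvd k : x 0 ∣ (w 0 - g α) k := by
    have hk : g (x 0 * β - x 1 * α) k = _ := congrFun (hs₀₁ ▸ h₀₁) k
    simp only [map_sub, ← smul_eq_mul, map_smul, Pi.sub_apply, Pi.smul_apply] at hk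
    refine hx.dvd_of_mul_eq_mul 0 1 (by decide) ((w 1 - g β) k) _ ?_
    simp only [Pi.sub_apply, smul_eq_mul] at hk ⊢
    linear_combination hk
  choose w' hw' using hdvd
  have hsmul : x 0 • w' = w 0 - g α := funext fun k => (hw' k).symm
  refine ⟨w', hx.eq_of_smul_eq_smul 0 ?_⟩
  rw [← map_smul, hsmul, map_sub, hgf.apply_apply_eq_zero, sub_zero, hw]

end Acyclicity

section Gorenstein

open scoped nonZeroDivisors

variable {R : Type*} [CommRing R] {p : ℕ} {u : Fin (2 * p + 1) → R} {x : Fin 3 → R} {I : Ideal R}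

/-- The self-dual resolution `0 → R → Rᴺ → Rᴺ → R`, with `N = 2p + 1`, of the Gorenstein ideal
generated by the Pfaffians of `cyclicMap u`, with its differential graded algebra structure. -/
def gorensteinResolution (hp : 1 ≤ p) (hu : ∀ e, u e ∈ R⁰) (hx : IsRegularTriple x)
    (h : ∀ i, x i ∈ LinearMap.range (pfaffianForm u)) :
    DGResolution R (Fin (2 * p + 1) → R) (Fin (2 * p + 1) → R) R :=
  have hinj : Function.Injective (LinearMap.toSpanSingleton R _ (pfaffian u)) := fun a b hab =>
    (mul_cancel_right_mem_nonZeroDivisors (pfaffian_mem_nonZeroDivisors hu 0)).mp (congrFun hab 0)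
  have hexact₂ : Function.Exact (LinearMap.toSpanSingleton R _ (pfaffian u)) (cyclicMap u) := by
    refine fun v => ⟨fun hv => ?_, ?_⟩
    · have hsmul i : x i • v ∈ LinearMap.range (LinearMap.toSpanSingleton R _ (pfaffian u)) := by
        obtain ⟨a, ha⟩ := h i
        exact ⟨a ⬝ᵥ v, by simp [dotProduct_smul_pfaffian hp hu, hv, ha]⟩
      exact hx.mem_range_of_smul_mem_range hinj (hsmul 0) (hsmul 1)
    · rintro ⟨t, rfl⟩
      simp [cyclicMap_pfaffian hp hu]
  { d₁ := pfaffianForm u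
    d₂ := cyclicMap u
    d₃ := LinearMap.toSpanSingleton R _ (pfaffian u)
    exact₁ := by
      refine fun v => ⟨fun hv => ?_, ?_⟩
      · refine hx.mem_range_of_smul_mem_range_of_exact hinj hexact₂ fun i => ?_
        obtain ⟨a, ha⟩ := h i
        exact ⟨pfaffianMul u a v, by simp [cyclicMap_pfaffianMul hp hu, hv, ha]⟩
      · rintro ⟨w, rfl⟩
        exact pfaffianForm_cyclicMap hp hu w
    exact₂ := hexact₂
    injective := hinj
    mul := pfaffianMul u
    d₂_mul := cyclicMap_pfaffianMul hp hu
    mul_isAlt := pfaffianMul_isAlt u }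

section

variable (hp : 1 ≤ p) (hu : ∀ e, u e ∈ R⁰) (hx : IsRegularTriple x)
  (h : ∀ i, x i ∈ LinearMap.range (pfaffianForm u))

theorem gorensteinResolution_act (a f : Fin (2 * p + 1) → R) :
    (gorensteinResolution hp hu hx h).act a f = a ⬝ᵥ f :=
  DGResolution.act_eq_of_d₃_eq (dotProduct_smul_pfaffian hp hu a f)

theorem gorensteinResolution_hasEntriesIn (hI : ∀ e, u e ∈ I) :
    (gorensteinResolution hp hu hx h).HasEntriesIn I where
  d₁_mem v := by
    refine mem_smul_top_self.mpr ?_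
    change Fintype.linearCombination R (pfaffian u) v ∈ I
    rw [Fintype.linearCombination_apply]
    exact I.sum_mem fun i _ => I.mul_mem_left (v i) (pfaffian_mem u hp hI i)
  d₂_mem v := mem_smul_top_pi.mpr fun k =>
    I.sub_mem (I.mul_mem_right _ (hI k)) (I.mul_mem_right _ (hI (k - 1)))
  d₃_mem t := mem_smul_top_pi.mpr fun i => I.mul_mem_left t (pfaffian_mem u hp hI i)

end

theorem pfaffianMul_mem (hp : 2 ≤ p) (hI : ∀ e, u e ∈ I) (a b : Fin (2 * p + 1) → R) :
    pfaffianMul u a b ∈ I • (⊤ : Submodule R (Fin (2 * p + 1) → R)) := by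
  simp only [pfaffianMul, Fintype.linearCombination_apply, LinearMap.sum_apply,
    LinearMap.smul_apply]
  exact sum_mem fun i _ => Submodule.smul_mem _ _ <| sum_mem fun j _ => Submodule.smul_mem _ _ <|
    mem_smul_top_pi.mpr (triplePfaffian_mem u hp hI i j)

/-- Entries of `cyclicMap` for which the Pfaffians generate an ideal with the same radical as
`x 0, x 1, x 2`. -/
def cyclicWeight (x : Fin 3 → R) (p : ℕ) (t : Fin (2 * p + 1)) : R :=
  if t = 0 then x 2 else x (if (t : ℕ) % 2 = 1 then 1 else 0) - x 2 ^ (t : ℕ)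

theorem cyclicWeight_of_odd {t : Fin (2 * p + 1)} (ht : (t : ℕ) % 2 = 1) :
    cyclicWeight x p t = x 1 - x 2 ^ (t : ℕ) := by
  have h0 : t ≠ 0 := by rintro rfl; simp at ht
  rw [cyclicWeight, if_neg h0, if_pos ht]

theorem cyclicWeight_of_even {t : Fin (2 * p + 1)} (h0 : t ≠ 0) (ht : (t : ℕ) % 2 = 0) :
    cyclicWeight x p t = x 0 - x 2 ^ (t : ℕ) := by
  rw [cyclicWeight, if_neg h0, if_neg (by omega)]

theorem cyclicWeight_cases (x : Fin 3 → R) (t : Fin (2 * p + 1)) :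
    t = 0 ∧ cyclicWeight x p t = x 2 ∨
      t ≠ 0 ∧ (t : ℕ) % 2 = 1 ∧ cyclicWeight x p t = x 1 - x 2 ^ (t : ℕ) ∨
      t ≠ 0 ∧ (t : ℕ) % 2 = 0 ∧ cyclicWeight x p t = x 0 - x 2 ^ (t : ℕ) := by
  obtain rfl | h0 := eq_or_ne t 0
  · exact .inl ⟨rfl, if_pos rfl⟩
  · exact .inr <| (Nat.mod_two_eq_zero_or_one t).symm.imp
      (fun ht => ⟨h0, ht, cyclicWeight_of_odd ht⟩) (fun ht => ⟨h0, ht, cyclicWeight_of_even h0 ht⟩)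

theorem cyclicWeight_mem (hx : ∀ i, x i ∈ I) (t : Fin (2 * p + 1)) : cyclicWeight x p t ∈ I := by
  obtain ⟨-, h⟩ | ⟨h0, -, h⟩ | ⟨h0, -, h⟩ := cyclicWeight_cases x t <;> rw [h]
  · exact hx 2
  · exact I.sub_mem (hx 1) (I.pow_mem_of_mem (hx 2) _ (Fin.pos_iff_ne_zero.mpr h0))
  · exact I.sub_mem (hx 0) (I.pow_mem_of_mem (hx 2) _ (Fin.pos_iff_ne_zero.mpr h0))

theorem exists_dominates_and_mem_of_pfaffian_mem {P : Ideal R} [hP : P.IsPrime]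
    {i : Fin (2 * p + 1)} (h : pfaffian u i ∈ P) : ∃ e, Dominates i e ∧ u e ∈ P := by
  obtain ⟨e, -, he⟩ := hP.prod_mem_iff.mp h
  by_cases hie : Dominates i e
  · exact ⟨e, hie, hP.mem_of_pow_mem _ he⟩
  · simp only [arc, hie, if_false, pow_zero] at he
    exact (P.ne_top_iff_one.mp hP.ne_top he).elim

variable [IsLocalRing R]

theorem mem_of_sub_pow_mem {z : R} (hz : z ∈ maximalIdeal R) {P : Ideal R} [hP : P.IsPrime]
    {w : R} {a b : ℕ} (hab : a ≠ b) (ha : w - z ^ a ∈ P) (hb : w - z ^ b ∈ P) : z ∈ P := by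
  wlog hlt : a < b generalizing a b
  · exact this hab.symm hb ha (by omega)
  have hunit : IsUnit (1 - z ^ (b - a)) := by
    have hpow : z ^ (b - a) ∈ maximalIdeal R := Ideal.pow_mem_of_mem _ hz _ (by omega)
    exact (isUnit_or_isUnit_one_sub_self _).resolve_left hpow
  have hmul : z ^ a * (1 - z ^ (b - a)) ∈ P := by
    convert P.sub_mem hb ha using 1
    rw [mul_sub, ← pow_add, Nat.add_sub_cancel' hlt.le, mul_one, sub_sub_sub_cancel_left]
  exact hP.mem_of_pow_mem a ((hP.mem_or_mem hmul).resolve_right fun hmem =>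
    hP.ne_top (P.eq_top_of_isUnit_mem hmem hunit))

theorem mem_of_forall_pfaffian_mem (hp : 1 ≤ p) (hx : x 2 ∈ maximalIdeal R) {P : Ideal R}
    [hP : P.IsPrime] (h : ∀ i, pfaffian (cyclicWeight x p) i ∈ P) (i : Fin 3) : x i ∈ P := by
  have hdom i := exists_dominates_and_mem_of_pfaffian_mem (h i)
  obtain ⟨o, ho, hoP⟩ := hdom 0
  obtain ⟨v, hv, hvP⟩ := hdom ⟨1, by omega⟩
  have ho' : o ≠ 0 ∧ (o : ℕ) % 2 = 1 := by unfold Dominates at ho; grind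
  have hv' : v ≠ 0 ∧ (v : ℕ) % 2 = 0 := by unfold Dominates at hv; grind
  rw [cyclicWeight_of_odd ho'.2] at hoP
  rw [cyclicWeight_of_even hv'.1 hv'.2] at hvP
  have h2 : x 2 ∈ P := by
    obtain ⟨k, hko, hkv⟩ : ∃ k, ¬ Dominates k o ∧ ¬ Dominates k v := by
      obtain hov | hov := lt_or_ge o v
      · exact ⟨v, by unfold Dominates; omega, not_dominates_self⟩
      · exact ⟨o, not_dominates_self, by unfold Dominates; omega⟩
    obtain ⟨e, he, heP⟩ := hdom k
    obtain ⟨-, hw⟩ | ⟨-, -, hw⟩ | ⟨-, -, hw⟩ := cyclicWeight_cases x e <;> rw [hw] at heP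
    · exact heP
    · exact mem_of_sub_pow_mem hx (Fin.val_ne_of_ne (by rintro rfl; exact hko he)) heP hoP
    · exact mem_of_sub_pow_mem hx (Fin.val_ne_of_ne (by rintro rfl; exact hkv he)) heP hvP
  have hpow {t : Fin (2 * p + 1)} (ht : t ≠ 0) : x 2 ^ (t : ℕ) ∈ P :=
    P.pow_mem_of_mem h2 _ (Fin.pos_iff_ne_zero.mpr ht)
  fin_cases i
  · exact (P.sub_mem_iff_left (hpow hv'.1)).mp hvP
  · exact (P.sub_mem_iff_left (hpow ho'.1)).mp hoP
  · exact h2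

variable [IsNoetherianRing R]

theorem IsRegularTriple.sub_mul_mem_nonZeroDivisors (hx : IsRegularTriple x) {i j : Fin 3}
    (hij : i ≠ j) (hi : x i ∈ maximalIdeal R) (s : R) : x j - x i * s ∈ R⁰ := by
  let K : Ideal R := LinearMap.ker (LinearMap.mulLeft R (x j - x i * s))
  have hmem {a : R} : a ∈ K ↔ (x j - x i * s) * a = 0 := Iff.rfl
  have hK : K = ⊥ := by
    refine Submodule.eq_bot_of_le_smul_of_le_jacobson_bot (maximalIdeal R) K
      (IsNoetherian.noetherian K) (fun a ha => ?_) (jacobson_eq_maximalIdeal ⊥ bot_ne_top).ge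
    rw [hmem] at ha
    obtain ⟨b, rfl⟩ := hx.dvd_of_mul_eq_mul i j hij (s * a) a (by linear_combination ha)
    refine Submodule.smul_mem_smul hi (hmem.mpr (hx.eq_zero_of_mul_eq_zero i _ ?_))
    linear_combination ha
  rw [mem_nonZeroDivisors_iff_left]
  exact fun a ha => (hK ▸ hmem.mpr ha : a ∈ (⊥ : Ideal R))

theorem cyclicWeight_mem_nonZeroDivisors (hx : IsRegularTriple x) (hx2 : x 2 ∈ maximalIdeal R)
    (t : Fin (2 * p + 1)) : cyclicWeight x p t ∈ R⁰ := by
  have hsub {j : Fin 3} (hj : 2 ≠ j) (ht : t ≠ 0) : x j - x 2 ^ (t : ℕ) ∈ R⁰ := by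
    rw [← mul_pow_sub_one (Fin.val_ne_zero_iff.mpr ht)]
    exact hx.sub_mul_mem_nonZeroDivisors hj hx2 _
  obtain ⟨-, h⟩ | ⟨h0, -, h⟩ | ⟨h0, -, h⟩ := cyclicWeight_cases x t <;> rw [h]
  · exact mem_nonZeroDivisors_iff_left.mpr (hx.eq_zero_of_mul_eq_zero 2)
  · exact hsub (by decide) h0
  · exact hsub (by decide) h0

open RingTheory.Sequence in
theorem exists_gorenstein_dgResolution {N : ℕ} (hN : Odd N) (hN5 : 5 ≤ N) (hI : I ≤ maximalIdeal R)
    (hxI : ∀ i, x i ∈ I) (h : IsWeaklyRegular R [x 0, x 1, x 2]) :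
    ∃ F : DGResolution R (Fin N → R) (Fin N → R) R,
      F.HasEntriesIn I ∧ (∀ a f, F.act a f = a ⬝ᵥ f) ∧
        ∀ a b, F.mul a b ∈ I • (⊤ : Submodule R (Fin N → R)) := by
  obtain ⟨p, rfl⟩ := hN
  have hp : 2 ≤ p := by omega
  have hp1 : 1 ≤ p := by omega
  have hxm i : x i ∈ maximalIdeal R := hI (hxI i)
  have hu := cyclicWeight_mem_nonZeroDivisors (p := p)
    (isRegularTriple_of_isWeaklyRegular hxm h) (hxm 2)
  let J : Ideal R := LinearMap.range (pfaffianForm (cyclicWeight x p))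
  have hradical i : x i ∈ J.radical := by
    rw [Ideal.radical_eq_sInf, Ideal.mem_sInf]
    rintro P ⟨hJP, hP⟩
    exact mem_of_forall_pfaffian_mem hp1 (hxm 2)
      (fun j => hJP ⟨Pi.single j 1, pfaffianForm_single _ j⟩) i
  choose k hk using hradical
  let n := ∑ i, k i + 1
  have hpow i : x i ^ n ∈ J := Ideal.pow_mem_of_pow_mem _ (hk i)
    ((Finset.single_le_sum_of_canonicallyOrdered (Finset.mem_univ i)).trans (Nat.le_succ _))
  have hreg : IsRegularTriple fun i => x i ^ n :=
    isRegularTriple_of_isWeaklyRegular (fun i => Ideal.pow_mem_of_mem _ (hxm i) n (by omega))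
      (isWeaklyRegular_pow hxm h (by omega))
  exact ⟨gorensteinResolution hp1 hu hreg hpow,
    gorensteinResolution_hasEntriesIn hp1 hu hreg hpow (cyclicWeight_mem hxI),
    gorensteinResolution_act hp1 hu hreg hpow, pfaffianMul_mem hp (cyclicWeight_mem hxI)⟩

end Gorenstein

section Realization

variable {R : Type} [CommRing R]

theorem single_comp_castLE_dotProduct {m n r : ℕ} (hm : r ≤ m) (hn : r ≤ n) (i : Fin m)
    (j : Fin n) : ((Pi.single i 1 : Fin m → R) ∘ Fin.castLE hm) ⬝ᵥ
      ((Pi.single j 1 : Fin n → R) ∘ Fin.castLE hn) =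
        if (i : ℕ) = j ∧ (i : ℕ) < r then 1 else 0 := by
  simp only [dotProduct, Function.comp_apply, Pi.single_apply, ← ite_and, mul_ite, mul_one,
    mul_zero]
  by_cases hi : (i : ℕ) < r
  · rw [Finset.sum_eq_single ⟨i, hi⟩] <;> grind
  · exact (Finset.sum_eq_zero fun l _ => if_neg (by grind)).trans (by simp [hi])

variable [IsLocalRing R]

theorem hasTorClassGWithRanks_of_dgResolution {m n₂ n r : ℕ}
    (F : DGResolution R (Fin m → R) (Fin n₂ → R) (Fin n → R)) (hn : 0 < n) (hrm : r ≤ m)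
    (hrn₂ : r ≤ n₂) (hF : F.HasEntriesIn (maximalIdeal R))
    (hmul : ∀ a b, F.mul a b ∈ maximalIdeal R • (⊤ : Submodule R (Fin n₂ → R)))
    (hact : ∀ (a : Fin m) (b : Fin n₂), F.act (Pi.single a 1) (Pi.single b 1) -
      (if (a : ℕ) = b ∧ (a : ℕ) < r then Pi.single ⟨0, hn⟩ 1 else 0) ∈
        maximalIdeal R • (⊤ : Submodule R (Fin n → R))) :
    HasTorClassGWithRanks R (LinearMap.range F.d₁) m n r :=
  ⟨n₂, hn, hrm, hrn₂, F.d₁, F.d₂, F.d₃, F.mul, F.act, rfl, F.exact₁.linearMap_ker_eq,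
    F.exact₂.linearMap_ker_eq, LinearMap.ker_eq_bot.mpr F.injective,
    fun v => mem_smul_top_self.mp (hF.d₁_mem v), hF.d₂_mem, hF.d₃_mem, F.d₂_mul, F.mul_isAlt,
    fun a b => (F.mul_isAlt.neg b a).symm, F.d₃_act, F.act_mul, fun _ _ => hmul _ _, hact⟩

theorem exists_hasTorClassGWithRanks_of_dgResolution_prod {r b g₁ g₂ g₃ : ℕ}
    (F : DGResolution R ((Fin r → R) × (Fin g₁ → R)) ((Fin (r + b) → R) × (Fin g₂ → R))
      (R × (Fin g₃ → R))) (hF : F.HasEntriesIn (maximalIdeal R))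
    (hmul : ∀ v w, F.mul v w ∈ maximalIdeal R • (⊤ : Submodule R _))
    (hact : ∀ v z, F.act v z - (appendEquiv R r b (v.1, 0) ⬝ᵥ z.1, 0) ∈
      maximalIdeal R • (⊤ : Submodule R (R × (Fin g₃ → R)))) :
    ∃ J : Ideal R, HasTorClassGWithRanks R J (r + g₁) (g₃ + 1) r := by
  let e₁ := appendEquiv R r g₁
  let e₂ := appendEquiv R (r + b) g₂
  let e₃ : (R × (Fin g₃ → R)) ≃ₗ[R] (Fin (g₃ + 1) → R) := Fin.consLinearEquiv R fun _ => R
  refine ⟨_, hasTorClassGWithRanks_of_dgResolution (F.congr e₁ e₂ e₃) (Nat.succ_pos g₃) (by omega)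
    (by omega) (hF.congr _ e₁ e₂ e₃) (fun _ _ => map_mem_smul_top e₂.toLinearMap (hmul _ _))
    fun a c => ?_⟩
  have hpairing : appendEquiv R r b ((e₁.symm (Pi.single a 1)).1, 0) ⬝ᵥ
      (e₂.symm (Pi.single c 1)).1 = if (a : ℕ) = c ∧ (a : ℕ) < r then 1 else 0 :=
    (appendEquiv_zero_dotProduct _ _).trans
      (single_comp_castLE_dotProduct (by omega) (by omega) a c)
  have h := map_mem_smul_top e₃.toLinearMap
    (hact (e₁.symm (Pi.single a 1)) (e₂.symm (Pi.single c 1)))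
  rw [hpairing, map_sub] at h
  convert h using 2
  · exact F.congr_act e₁ e₂ e₃ _ _
  · ext i
    split_ifs <;> cases i using Fin.cases <;> simp [e₃, Fin.consLinearEquiv]

variable [IsNoetherianRing R]

open RingTheory.Sequence in
theorem HasResolution.exists_hasTorClassGWithRanks {x : Fin 3 → R} {b g₁ g₃ r : ℕ}
    (hres : HasResolution x b g₁ g₃) (hx : ∀ i, x i ∈ maximalIdeal R)
    (h : IsWeaklyRegular R [x 0, x 1, x 2]) (hodd : Odd (r + b)) (hrb : 5 ≤ r + b) :
    ∃ J : Ideal R, HasTorClassGWithRanks R J (r + g₁) (g₃ + 1) r := by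
  obtain ⟨g₂, G, hG, hsq⟩ := hres
  let q := Ideal.span (Set.range x)
  have hq : q ≤ maximalIdeal R := Ideal.span_le.mpr (Set.range_subset_iff.mpr hx)
  obtain ⟨E, K₂, K₃, hL⟩ := G.exists_liftsThrough_pow hq
    (exists_span_pow_smul_top_le _ (by rintro _ ⟨i, rfl⟩; exact ⟨2, hsq i⟩))
  have hqE : q ^ E ≤ maximalIdeal R := hL.le₁₂.trans (hL.le₂₃.trans hL.le₃₄)
  have hE : 0 < E := by
    refine Nat.pos_of_ne_zero ?_
    rintro rfl
    exact Ideal.IsPrime.ne_top' (top_le_iff.mp (by simpa using hqE))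
  obtain ⟨F, hF, hFact, hFmul⟩ := exists_gorenstein_dgResolution (x := fun i => x i ^ E) hodd
    hrb hqE (fun i => Ideal.pow_mem_pow (Ideal.subset_span (Set.mem_range_self i)) E)
    (isWeaklyRegular_pow hx h hE)
  obtain ⟨D, hD⟩ := exists_trimmingData (appendEquiv R r b).symm hF hL
  refine exists_hasTorClassGWithRanks_of_dgResolution_prod D.toDGResolution
    (hD.hasEntriesIn hF hG hL) (hD.mul_mem hL.le₃₄ fun v w => smul_top_mono hqE (hFmul v w))
    fun v z => ?_
  have hact := hD.act_sub_mem hF hG hL v z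
  rwa [hFact] at hact

end Realization

open RingTheory.Sequence in
theorem mem_maximalIdeal_of_isRegular {R : Type*} [CommRing R] [IsLocalRing R] {l : List R}
    (h : IsRegular R l) {a : R} (ha : a ∈ l) : a ∈ maximalIdeal R := by
  refine le_maximalIdeal (J := Ideal.ofList l) (fun htop => h.top_ne_smul ?_)
    (Ideal.subset_span ha)
  rw [htop, Submodule.top_smul]

end TorClassG

open TorClassG in
theorem realizability_classG_case2_general {R : Type} [CommRing R] [IsNoetherianRing R]
    [IsLocalRing R] (x : Fin 3 → R) (hreg : RingTheory.Sequence.IsRegular R [x 0, x 1, x 2])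
    (m n r : ℕ) (harith : r + 3 * (n - 1) = m + 2) (hn : 3 ≤ n) (hm : 2 * n + 1 ≤ m) :
    ∃ J : Ideal R, HasTorClassGWithRanks R J m n r := by
  have hx i : x i ∈ maximalIdeal R :=
    mem_maximalIdeal_of_isRegular hreg (by fin_cases i <;> simp)
  have hw := hreg.toIsWeaklyRegular
  obtain ⟨s, rfl⟩ : ∃ s, n = s + 3 := ⟨n - 3, by omega⟩
  obtain rfl : m = r + (3 * s + 4) := by omega
  obtain ⟨h₁, h₂⟩ :=
    hasResolution_three_mul_add_four hx (isRegularTriple_of_isWeaklyRegular hx hw) s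
  rcases Nat.even_or_odd (r + s) with heven | hodd
  · exact h₁.exists_hasTorClassGWithRanks hx hw heven.add_one
      (by have := Nat.even_iff.mp heven; omega)
  · exact h₂.exists_hasTorClassGWithRanks hx hw (hodd.add_even even_two) (by omega)

/-!
STATEMENT 15 (part of Corollary 5.8, case (2)): let `(R,𝔪,k)` be a regular local ring
of dimension 3 and `(m,n,r)` positive integers with `r = m - 3(n-1) + 2 ≥ 2`, `n ≥ 3`
and `m ≥ 2n+1 ≥ 7`.  Then there is an ideal `J ⊆ R` with `pd_R(R/J) = 3` such that
`R/J` has Tor-algebra class `G(r)` and realizes the tuple `(m,n,r)`.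
-/
theorem realizability_classG_case2
    {R : Type} [CommRing R] [IsNoetherianRing R] [IsLocalRing R]
    -- regular local of dimension 3
    (x : Fin 3 → R)
    (hreg : RingTheory.Sequence.IsRegular R [x 0, x 1, x 2])
    (hx : Ideal.span {x 0, x 1, x 2} = maximalIdeal R)
    (m n r : ℕ)
    (harith : r + 3 * (n - 1) = m + 2) (hr : 2 ≤ r) (hn : 3 ≤ n)
    (hm : 2 * n + 1 ≤ m) (hm7 : 7 ≤ 2 * n + 1) :
    ∃ J : Ideal R, HasTorClassGWithRanks R J m n r :=
  realizability_classG_case2_general x hreg m n r harith hn hm
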